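/- arXiv:1704.00699 — 3 statements merged into one kernel-verified Lean document; each statement's English description precedes it below -/
import Mathlib

section
/- Suppose that X and Y are standard Borel spaces, that μ is a Borel probability measure on X, and that ν is a Borel measure on Y. Suppose that R ⊆ X × Y is Borel, locally finite, (μ,ν)-preserving, and expansive. Then there is a μ-conull Borel set X' ⊆ X and a Borel injection f : X' → Y compatible with R. -/
open MeasureTheory Set
open scoped ENNReal

/-- `R ⊆ X × Y` is `(μ,ν)`-preserving: every Borel bijection `f : A → B` between Borel
subsets whose graph is contained in `R` satisfies `μ(A) = ν(B)`. -/
def MeasurePreservingRel {X Y : Type*} [MeasurableSpace X] [MeasurableSpace Y]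
    (R : Set (X × Y)) (μ : Measure X) (ν : Measure Y) : Prop :=
  ∀ (A : Set X) (f : X → Y), MeasurableSet A → Measurable f → Set.InjOn f A →
    (∀ x ∈ A, (x, f x) ∈ R) → μ A = ν (f '' A)

section Analytic

open Filter Topology

theorem isCompact_setOf_forall_le (b : ℕ → ℕ) : IsCompact {x : ℕ → ℕ | ∀ i, x i ≤ b i} := by
  have := isCompact_univ_pi (s := fun i => Iic (b i)) fun i => (finite_Iic (b i)).isCompact
  convert this using 1
  ext x
  simp [Pi.le_def]

/-- A compact box in Baire space has, inside any open neighbourhood, one of its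
finite-stage approximations. -/
theorem exists_forall_lt_le_subset_of_isOpen (b : ℕ → ℕ) {U : Set (ℕ → ℕ)} (hU : IsOpen U)
    (hb : {x : ℕ → ℕ | ∀ i, x i ≤ b i} ⊆ U) :
    ∃ n, {x : ℕ → ℕ | ∀ i < n, x i ≤ b i} ⊆ U := by
  by_contra! hcon
  simp only [not_subset] at hcon
  choose x hx hxU using hcon
  have hK := isCompact_setOf_forall_le b
  obtain ⟨a, ha, φ, hφ, hlim⟩ := hK.tendsto_subseq (x := fun n i => min (x n i) (b i))
    fun n i => min_le_right _ _
  have hlim' : Tendsto (fun n => x (φ n)) atTop (𝓝 a) := by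
    rw [tendsto_pi_nhds] at hlim ⊢
    intro i
    refine (hlim i).congr' ?_
    filter_upwards [eventually_gt_atTop i] with n hn
    exact min_eq_left (hx (φ n) i (hn.trans_le (hφ.id_le n)))
  obtain ⟨n, hn⟩ := (hlim'.eventually (hU.mem_nhds (hb ha))).exists
  exact hxU _ hn

variable {X : Type*} [TopologicalSpace X] [MeasurableSpace X]

theorem exists_isCompact_le_measure_of_lt_measure_range [T2Space X] (μ : Measure X)
    [μ.OuterRegular] {f : (ℕ → ℕ) → X} (hf : Continuous f) {r : ℝ≥0∞} (hr : r < μ (range f)) :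
    ∃ K ⊆ range f, IsCompact K ∧ r ≤ μ K := by
  have step : ∀ (n : ℕ) (S : Set (ℕ → ℕ)), ∃ k, r < μ (f '' S) →
      r < μ (f '' (S ∩ {x | x n ≤ k})) := by
    intro n S
    by_cases hS : r < μ (f '' S)
    · have hU : f '' S = ⋃ k, f '' (S ∩ {x | x n ≤ k}) := by
        rw [← image_iUnion, ← inter_iUnion]
        congr 1
        ext x
        simp only [mem_inter_iff, mem_iUnion, mem_ofPred_eq, iff_self_and]
        exact fun _ => ⟨x n, le_rfl⟩
      have hmono : Monotone fun k => f '' (S ∩ {x | x n ≤ k}) := fun k l hkl =>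
        image_mono (inter_subset_inter_right _ fun x (hx : x n ≤ k) => hx.trans hkl)
      rw [hU, hmono.measure_iUnion, lt_iSup_iff] at hS
      obtain ⟨k, hk⟩ := hS
      exact ⟨k, fun _ => hk⟩
    · exact ⟨0, fun h => absurd h hS⟩
  choose k hk using step
  let S : ℕ → Set (ℕ → ℕ) := fun n =>
    Nat.rec univ (fun n S => S ∩ {x | x n ≤ k n S}) n
  let b : ℕ → ℕ := fun n => k n (S n)
  have hS : ∀ n, r < μ (f '' S n) := by
    intro n
    induction n with
    | zero => simpa [S] using hr
    | succ n ih => exact hk n (S n) ih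
  have hSb : ∀ n, S n = {x | ∀ i < n, x i ≤ b i} := by
    intro n
    induction n with
    | zero => simp [S]
    | succ n ih =>
      have : S (n + 1) = S n ∩ {x | x n ≤ b n} := rfl
      rw [this, ih]
      ext x
      simp only [mem_inter_iff, mem_ofPred_eq, Nat.forall_lt_succ_right]
  refine ⟨f '' {x | ∀ i, x i ≤ b i}, image_subset_range _ _, (isCompact_setOf_forall_le b).image hf, ?_⟩
  rw [Set.measure_eq_iInf_isOpen]
  refine le_iInf₂ fun V hV => le_iInf fun hVo => ?_
  obtain ⟨n, hn⟩ := exists_forall_lt_le_subset_of_isOpen b (hVo.preimage hf)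
    (image_subset_iff.1 hV)
  rw [← hSb] at hn
  exact (hS n).le.trans (measure_mono (image_subset_iff.2 hn))

/-- Analytic sets are universally measurable. -/
theorem MeasureTheory.AnalyticSet.nullMeasurableSet [T2Space X] [BorelSpace X] {s : Set X}
    (hs : AnalyticSet s) (μ : Measure X) [IsFiniteMeasure μ] [μ.OuterRegular] :
    NullMeasurableSet s μ := by
  rw [AnalyticSet] at hs
  obtain rfl | ⟨f, hf, rfl⟩ := hs
  · exact nullMeasurableSet_empty
  by_cases h0 : μ (range f) = 0
  · exact NullMeasurableSet.of_null h0
  obtain ⟨u, -, hu, hlim⟩ := exists_seq_strictMono_tendsto' (pos_iff_ne_zero.2 h0)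
  choose K hKs hKc hK using fun n =>
    exists_isCompact_le_measure_of_lt_measure_range μ hf (hu n).2
  have hKm : MeasurableSet (⋃ n, K n) := .iUnion fun n => (hKc n).measurableSet
  have hae : (⋃ n, K n) =ᵐ[μ] range f := by
    refine ae_eq_of_subset_of_measure_ge (iUnion_subset hKs) ?_ hKm.nullMeasurableSet
      (measure_ne_top _ _)
    exact le_of_tendsto' hlim fun n => (hK n).trans (measure_mono (subset_iUnion K n))
  exact hKm.nullMeasurableSet.congr hae

end Analytic

theorem nullMeasurableSet_image_of_measurable {X Z : Type*} [MeasurableSpace X]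
    [StandardBorelSpace X] [MeasurableSpace Z] [StandardBorelSpace Z] (μ : Measure X)
    [IsFiniteMeasure μ] {s : Set Z} (hs : MeasurableSet s) {f : Z → X} (hf : Measurable f) :
    NullMeasurableSet (f '' s) μ := by
  let _ := upgradeStandardBorel X
  exact (hs.analyticSet_image hf).nullMeasurableSet μ

theorem exists_measurable_of_injOn_fst {X Y : Type*} [MeasurableSpace X] [StandardBorelSpace X]
    [MeasurableSpace Y] [StandardBorelSpace Y] [Nonempty Y] {G : Set (X × Y)}
    (hG : MeasurableSet G) (hinj : InjOn Prod.fst G) :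
    ∃ h : X → Y, Measurable h ∧ ∀ x ∈ Prod.fst '' G, (x, h x) ∈ G := by
  classical
  have hex : ∀ x, ∃ y, x ∈ Prod.fst '' G → (x, y) ∈ G := by
    intro x
    by_cases hx : x ∈ Prod.fst '' G
    · obtain ⟨⟨x, y⟩, hxy, rfl⟩ := hx
      exact ⟨y, fun _ => hxy⟩
    · exact ⟨Classical.arbitrary Y, fun h => absurd h hx⟩
  choose h hh using hex
  have hGX : MeasurableSet (Prod.fst '' G) := hG.image_of_measurable_injOn measurable_fst hinj
  refine ⟨fun x => if x ∈ Prod.fst '' G then h x else Classical.arbitrary Y, ?_, ?_⟩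
  · intro s hs
    have : (fun x => if x ∈ Prod.fst '' G then h x else Classical.arbitrary Y) ⁻¹' s =
        Prod.fst '' (G ∩ Prod.snd ⁻¹' s) ∪
          ((Prod.fst '' G)ᶜ ∩ {_x | Classical.arbitrary Y ∈ s}) := by
      ext x
      by_cases hx : x ∈ Prod.fst '' G
      · rw [mem_preimage, if_pos hx]
        simp only [mem_union, mem_inter_iff, mem_compl_iff, hx,
          not_true_eq_false, false_and, or_false]
        constructor
        · exact fun hxs => ⟨(x, h x), ⟨hh x hx, hxs⟩, rfl⟩
        · rintro ⟨p, ⟨hp, hps⟩, rfl⟩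
          have := hinj (hh p.1 hx) hp rfl
          rw [← this] at hps
          exact hps
      · have hx' : x ∉ Prod.fst '' (G ∩ Prod.snd ⁻¹' s) :=
          fun h' => hx (image_mono inter_subset_left h')
        rw [mem_preimage, if_neg hx]
        simp only [mem_union, hx', false_or, mem_inter_iff,
          mem_compl_iff, hx, not_false_eq_true, true_and, mem_ofPred_eq]
    rw [this]
    exact ((hG.inter (measurable_snd hs)).image_of_measurable_injOn measurable_fst
      (hinj.mono inter_subset_left)).union (hGX.compl.inter (.const _))
  · intro x hx
    simpa only [if_pos hx] using hh x hx

/-- A finite set of points in a second countable `T1` space can be isolated by a fixed sequence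
of open sets. -/
theorem exists_seq_isolating (X : Type*) [MeasurableSpace X] [StandardBorelSpace X] :
    ∃ B : ℕ → Set X, (∀ n, MeasurableSet (B n)) ∧
      ∀ F : Set X, F.Finite → ∀ x, ∃ n, x ∈ B n ∧ ∀ x' ∈ F, x' ∈ B n → x' = x := by
  let _ := upgradeStandardBorel X
  obtain ⟨B, hB⟩ := ((TopologicalSpace.countable_countableBasis X).insert
    ∅).exists_eq_range (insert_nonempty _ _)
  refine ⟨B, fun n => ?_, fun F hF x => ?_⟩
  · obtain h | h : B n ∈ insert ∅ (TopologicalSpace.countableBasis X) := by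
      rw [hB]; exact mem_range_self n
    exacts [h ▸ .empty, (TopologicalSpace.isOpen_of_mem_countableBasis h).measurableSet]
  · have hopen : IsOpen (F \ {x})ᶜ := (hF.subset sdiff_subset).isClosed.isOpen_compl
    obtain ⟨V, hV, hxV, hVF⟩ := (TopologicalSpace.isBasis_countableBasis X).exists_subset_of_mem_open
      (a := x) (by simp) hopen
    obtain ⟨n, rfl⟩ : V ∈ range B := hB ▸ mem_insert_of_mem _ hV
    refine ⟨n, hxV, fun x' hx' hn => ?_⟩
    by_contra hne
    exact hVF hn ⟨hx', hne⟩

theorem exists_measurable_injOn_of_injective_part {X Y : Type*} [MeasurableSpace X]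
    [StandardBorelSpace X] [MeasurableSpace Y] [StandardBorelSpace Y] [Nonempty Y] (μ : Measure X)
    [IsFiniteMeasure μ] {Q : Set (X × Y)} (hQ : MeasurableSet Q) :
    ∃ (D : Set X) (h : X → Y), MeasurableSet D ∧ Measurable h ∧ InjOn h D ∧
      (∀ x ∈ D, (x, h x) ∈ Q) ∧ ∀ᵐ x ∂μ, ∀ y, (x, y) ∈ Q →
        (∀ y', (x, y') ∈ Q → y' = y) → (∀ x', (x', y) ∈ Q → x' = x) → x ∈ D ∧ h x = y := by
  let E : Set X := Prod.fst '' Q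
  let F₁ : Set X := Prod.fst '' {p : X × Y × Y | (p.1, p.2.1) ∈ Q ∧ (p.1, p.2.2) ∈ Q ∧
    p.2.1 ≠ p.2.2}
  let F₂ : Set X := Prod.fst '' {p : X × Y × X | (p.1, p.2.1) ∈ Q ∧ (p.2.2, p.2.1) ∈ Q ∧
    p.1 ≠ p.2.2}
  have hE : NullMeasurableSet E μ := nullMeasurableSet_image_of_measurable μ hQ measurable_fst
  have hF₁ : NullMeasurableSet F₁ μ := by
    refine nullMeasurableSet_image_of_measurable μ ?_ measurable_fst
    refine .inter (s₁ := {p : X × Y × Y | (p.1, p.2.1) ∈ Q})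
      ((by fun_prop : Measurable fun p : X × Y × Y => (p.1, p.2.1)) hQ)
      (.inter (s₁ := {p : X × Y × Y | (p.1, p.2.2) ∈ Q})
      ((by fun_prop : Measurable fun p : X × Y × Y => (p.1, p.2.2)) hQ) ?_)
    exact (measurableSet_eq_fun (by fun_prop) (by fun_prop)).compl
  have hF₂ : NullMeasurableSet F₂ μ := by
    refine nullMeasurableSet_image_of_measurable μ ?_ measurable_fst
    refine .inter (s₁ := {p : X × Y × X | (p.1, p.2.1) ∈ Q})
      ((by fun_prop : Measurable fun p : X × Y × X => (p.1, p.2.1)) hQ)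
      (.inter (s₁ := {p : X × Y × X | (p.2.2, p.2.1) ∈ Q})
      ((by fun_prop : Measurable fun p : X × Y × X => (p.2.2, p.2.1)) hQ) ?_)
    exact (measurableSet_eq_fun (by fun_prop) (by fun_prop)).compl
  obtain ⟨D, hDs, hD, hDae⟩ := ((hE.diff hF₁).diff hF₂).exists_measurable_subset_ae_eq
  have huniq : ∀ x ∈ D, ∀ y y', (x, y) ∈ Q → (x, y') ∈ Q → y = y' := by
    intro x hx y y' h1 h2
    by_contra hne
    exact (hDs hx).1.2 ⟨(x, y, y'), ⟨h1, h2, hne⟩, rfl⟩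
  obtain ⟨h, hm, hh⟩ := exists_measurable_of_injOn_fst (G := Q ∩ Prod.fst ⁻¹' D)
    (hQ.inter (measurable_fst hD)) (by
      rintro ⟨x, y⟩ ⟨h1, h2⟩ ⟨x', y'⟩ ⟨h3, h4⟩ (rfl : x = x')
      rw [huniq x h2 y y' h1 h3])
  have hhQ : ∀ x ∈ D, (x, h x) ∈ Q := by
    intro x hx
    obtain ⟨p, hp, rfl⟩ := (hDs hx).1.1
    exact (hh p.1 ⟨p, ⟨hp, hx⟩, rfl⟩).1
  refine ⟨D, h, hD, hm, ?_, hhQ, ?_⟩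
  · intro x hx x' hx' heq
    by_contra hne
    exact (hDs hx).2 ⟨(x, h x, x'), ⟨hhQ x hx, heq ▸ hhQ x' hx', hne⟩, rfl⟩
  · filter_upwards [hDae.mem_iff] with x hx y hxy hy hx'
    have hxD : x ∈ D := by
      rw [hx]
      refine ⟨⟨⟨_, hxy, rfl⟩, ?_⟩, ?_⟩
      · rintro ⟨⟨_, y₁, y₂⟩, ⟨h1, h2, hne⟩, rfl⟩
        exact hne ((hy _ h1).trans (hy _ h2).symm)
      · rintro ⟨⟨_, y₁, x₂⟩, ⟨h1, h2, hne⟩, rfl⟩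
        obtain rfl : y₁ = y := hy _ h1
        exact hne (hx' _ h2).symm
    exact ⟨hxD, huniq x hxD _ _ (hhQ x hxD) hxy⟩

/-- Almost everywhere Lusin–Novikov: up to a null set, a Borel relation with finite sections is a
countable union of graphs of partial Borel injections. The index `0` is kept free. -/
theorem exists_seq_measurable_injOn_of_finite_sections {X Y : Type*} [MeasurableSpace X]
    [StandardBorelSpace X] [MeasurableSpace Y] [StandardBorelSpace Y] [Nonempty Y] (μ : Measure X)
    [IsFiniteMeasure μ] {R : Set (X × Y)} (hR : MeasurableSet R)
    (hlocX : ∀ x : X, {y | (x, y) ∈ R}.Finite) (hlocY : ∀ y : Y, {x | (x, y) ∈ R}.Finite) :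
    ∃ (D : ℕ → Set X) (h : ℕ → X → Y), (∀ n, MeasurableSet (D n)) ∧ (∀ n, Measurable (h n)) ∧
      (∀ n, InjOn (h n) (D n)) ∧ (∀ n, ∀ x ∈ D n, (x, h n x) ∈ R) ∧ D 0 = ∅ ∧
      ∀ᵐ x ∂μ, ∀ y, (x, y) ∈ R → ∃ n, x ∈ D n ∧ h n x = y := by
  obtain ⟨B, hB, hBs⟩ := exists_seq_isolating X
  obtain ⟨C, hC, hCs⟩ := exists_seq_isolating Y
  choose D h hD hh hinj hDR hae using fun n : ℕ =>
    exists_measurable_injOn_of_injective_part μ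
      (hR.inter ((hB n.unpair.1).prod (hC n.unpair.2)))
  refine ⟨fun n => Nat.casesOn n ∅ D, fun n => h n.pred, ?_, fun n => hh _, ?_, ?_, rfl, ?_⟩
  · rintro (_ | n)
    exacts [.empty, hD n]
  · rintro (_ | n)
    exacts [injOn_empty _, hinj n]
  · rintro (_ | n) x hx
    exacts [hx.elim, (hDR n x hx).1]
  · filter_upwards [ae_all_iff.2 hae] with x hx y hxy
    obtain ⟨i, hi, hi'⟩ := hBs _ (hlocY y) x
    obtain ⟨j, hj, hj'⟩ := hCs _ (hlocX x) y
    refine ⟨Nat.pair i j + 1, hx (Nat.pair i j) y ⟨hxy, ?_⟩ ?_ ?_⟩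
    · simp [hi, hj]
    · rintro y' ⟨h1, h2⟩
      exact hj' y' h1 (by simpa using h2.2)
    · rintro x' ⟨h1, h2⟩
      exact hi' x' h1 (by simpa using h2.1)

section Matching

variable {X Y : Type*}

/-- The neighbourhood of `A` under the relation generated by a family of partial maps. -/
def neighbors (D : ℕ → Set X) (h : ℕ → X → Y) (A : Set X) : Set Y :=
  ⋃ a, h a '' (A ∩ D a)

/-- The points from which an alternating path with at most `n` matched edges leads to an
unmatched point. -/
def alternatingReach (D : ℕ → Set X) (h : ℕ → X → Y) (m : X → ℕ) : ℕ → Set X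
  | 0 => {x | m x = 0}
  | n + 1 => alternatingReach D h m n ∪
      {x | m x ≠ 0 ∧ h (m x) x ∈ neighbors D h (alternatingReach D h m n)}

open Classical in
/-- Reassign the value `a` on `S`, and forget the assignment on `T`. -/
noncomputable def reassign (m : X → ℕ) (S T : Set X) (a : ℕ) (x : X) : ℕ :=
  if x ∈ S then a else if x ∈ T then 0 else m x

variable {D : ℕ → Set X} {h : ℕ → X → Y} {m : X → ℕ}

theorem reassign_of_mem {S T : Set X} {a : ℕ} {x : X} (hx : x ∈ S) :
    reassign m S T a x = a := if_pos hx

theorem reassign_of_notMem_of_mem {S T : Set X} {a : ℕ} {x : X} (hS : x ∉ S) (hT : x ∈ T) :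
    reassign m S T a x = 0 := by simp [reassign, hS, hT]

theorem reassign_of_notMem {S T : Set X} {a : ℕ} {x : X} (hS : x ∉ S) (hT : x ∉ T) :
    reassign m S T a x = m x := by simp [reassign, hS, hT]

theorem setOf_ne_reassign_subset {S T : Set X} {a : ℕ} :
    {x | m x ≠ reassign m S T a x} ⊆ S ∪ T := by
  intro x hx
  by_contra hST
  rw [mem_union, not_or] at hST
  exact hx (reassign_of_notMem hST.1 hST.2).symm

theorem setOf_reassign_eq_zero {S T : Set X} {a : ℕ} (ha : a ≠ 0) (hST : Disjoint S T) :
    {x | reassign m S T a x = 0} = ({x | m x = 0} \ S) ∪ T := by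
  ext x
  by_cases hS : x ∈ S
  · simp [reassign_of_mem hS, ha, hS, hST.notMem_of_mem_left hS]
  · by_cases hT : x ∈ T
    · simp [reassign_of_notMem_of_mem hS hT, hT]
    · simp [reassign_of_notMem hS hT, hS, hT]

theorem setOf_eq_zero_subset_alternatingReach (n : ℕ) :
    {x | m x = 0} ⊆ alternatingReach D h m n := by
  induction n with
  | zero => exact subset_rfl
  | succ n ih => exact ih.trans subset_union_left

variable [MeasurableSpace X]

/-- `m` encodes the matching that sends `x` to `h (m x) x` wherever `m x ≠ 0`. -/
structure IsMatching (D : ℕ → Set X) (h : ℕ → X → Y) (m : X → ℕ) : Prop where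
  measurable : Measurable m
  mem (x : X) : m x ≠ 0 → x ∈ D (m x)
  inj (x x' : X) : m x ≠ 0 → m x' ≠ 0 → h (m x) x = h (m x') x' → x = x'

/-- A sequence of partial measurable injections `h n : D n → Y` all of whose measurable
selections preserve measure. The index `0` is reserved for unmatched points. -/
structure IsMeasurePreservingFamily [MeasurableSpace Y] (D : ℕ → Set X) (h : ℕ → X → Y) (μ : Measure X)
    (ν : Measure Y) : Prop where
  measurableSet (n : ℕ) : MeasurableSet (D n)
  measurable (n : ℕ) : Measurable (h n)
  injOn (n : ℕ) : InjOn (h n) (D n)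
  zero : D 0 = ∅
  preserving (A : Set X) (g : X → Y) : MeasurableSet A → Measurable g → InjOn g A →
    (∀ x ∈ A, ∃ n, x ∈ D n ∧ g x = h n x) → μ A = ν (g '' A)

namespace IsMatching

theorem reassign (hm : IsMatching D h m) {S T : Set X} {a : ℕ} (hS : MeasurableSet S)
    (hT : MeasurableSet T) (hSD : S ⊆ D a) (ha : InjOn (h a) (D a))
    (hdisj : ∀ x ∈ S, ∀ x', x' ∉ S → x' ∉ T → m x' ≠ 0 → h (m x') x' ≠ h a x) :
    IsMatching D h (reassign m S T a) where
  measurable := Measurable.ite hS measurable_const (Measurable.ite hT measurable_const hm.measurable)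
  mem x hx := by
    by_cases hxS : x ∈ S
    · rw [reassign_of_mem hxS]
      exact hSD hxS
    · by_cases hxT : x ∈ T
      · exact absurd (reassign_of_notMem_of_mem hxS hxT) hx
      · rw [reassign_of_notMem hxS hxT] at hx ⊢
        exact hm.mem x hx
  inj x x' hx hx' heq := by
    by_cases hxS : x ∈ S
    · rw [reassign_of_mem hxS] at heq
      by_cases hxS' : x' ∈ S
      · rw [reassign_of_mem hxS'] at heq
        exact ha (hSD hxS) (hSD hxS') heq
      · by_cases hxT' : x' ∈ T
        · exact absurd (reassign_of_notMem_of_mem hxS' hxT') hx'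
        · rw [reassign_of_notMem hxS' hxT'] at hx' heq
          exact absurd heq.symm (hdisj x hxS x' hxS' hxT' hx')
    · by_cases hxT : x ∈ T
      · exact absurd (reassign_of_notMem_of_mem hxS hxT) hx
      rw [reassign_of_notMem hxS hxT] at hx heq
      by_cases hxS' : x' ∈ S
      · rw [reassign_of_mem hxS'] at heq
        exact absurd heq (hdisj x' hxS' x hxS hxT hx)
      · by_cases hxT' : x' ∈ T
        · exact absurd (reassign_of_notMem_of_mem hxS' hxT') hx'
        · rw [reassign_of_notMem hxS' hxT'] at hx' heq
          exact hm.inj x x' hx hx' heq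

theorem injOn (hm : IsMatching D h m) : InjOn (fun x => h (m x) x) {x | m x ≠ 0} :=
  fun x hx x' hx' heq => hm.inj x x' hx hx' heq

variable [MeasurableSpace Y] {μ : Measure X} {ν : Measure Y}

theorem measurable_apply (hm : IsMatching D h m) (hh : ∀ n, Measurable (h n)) :
    Measurable fun x => h (m x) x :=
  (measurable_from_prod_countable_right (f := fun p : ℕ × X => h p.1 p.2) hh).comp
    (hm.measurable.prodMk measurable_id)

theorem measure_image (hm : IsMatching D h m) (hD : IsMeasurePreservingFamily D h μ ν)
    {A : Set X} (hA : MeasurableSet A) (hA0 : ∀ x ∈ A, m x ≠ 0) :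
    μ A = ν ((fun x => h (m x) x) '' A) :=
  hD.preserving A _ hA (hm.measurable_apply hD.measurable) (hm.injOn.mono hA0)
    fun x hx => ⟨m x, hm.mem x (hA0 x hx), rfl⟩

end IsMatching

variable [MeasurableSpace Y] {μ : Measure X} {ν : Measure Y}

namespace IsMeasurePreservingFamily

theorem measure_image (hD : IsMeasurePreservingFamily D h μ ν) {A : Set X} {a : ℕ}
    (hA : MeasurableSet A) (hAD : A ⊆ D a) : μ A = ν (h a '' A) :=
  hD.preserving A _ hA (hD.measurable a) ((hD.injOn a).mono hAD) fun _ hx => ⟨a, hAD hx, rfl⟩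

variable [StandardBorelSpace X] [StandardBorelSpace Y]

theorem measurableSet_image (hD : IsMeasurePreservingFamily D h μ ν) {A : Set X} {a : ℕ}
    (hA : MeasurableSet A) (hAD : A ⊆ D a) : MeasurableSet (h a '' A) :=
  hA.image_of_measurable_injOn (hD.measurable a) ((hD.injOn a).mono hAD)

theorem measurableSet_neighbors (hD : IsMeasurePreservingFamily D h μ ν) {A : Set X}
    (hA : MeasurableSet A) : MeasurableSet (neighbors D h A) :=
  .iUnion fun a => hD.measurableSet_image (hA.inter (hD.measurableSet a)) inter_subset_right

theorem measurableSet_alternatingReach (hD : IsMeasurePreservingFamily D h μ ν)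
    (hm : IsMatching D h m) (n : ℕ) : MeasurableSet (alternatingReach D h m n) := by
  induction n with
  | zero => exact hm.measurable (measurableSet_singleton 0)
  | succ n ih =>
    exact ih.union ((hm.measurable (measurableSet_singleton 0)).compl.inter
      (hm.measurable_apply hD.measurable (hD.measurableSet_neighbors ih)))

end IsMeasurePreservingFamily

variable [StandardBorelSpace X] [StandardBorelSpace Y]

/-- Shifting a matching along alternating paths frees a positive part of any non-null set of
points reached by such paths, at a cost proportional to the length of the paths. -/
theorem IsMatching.exists_free (hD : IsMeasurePreservingFamily D h μ ν) [IsFiniteMeasure μ]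
    (hm : IsMatching D h m) (n : ℕ) {C : Set X} (hC : MeasurableSet C)
    (hCn : C ⊆ alternatingReach D h m n) (hC0 : μ C ≠ 0) :
    ∃ (m' : X → ℕ) (C' : Set X), IsMatching D h m' ∧ MeasurableSet C' ∧ C' ⊆ C ∧ μ C' ≠ 0 ∧
      (∀ x ∈ C', m' x = 0) ∧ (∀ x ∉ alternatingReach D h m n, m' x = m x) ∧
      (∀ x, m' x ≠ 0 → ∃ x', m x' ≠ 0 ∧ h (m x') x' = h (m' x) x) ∧
      μ {x | m' x = 0} = μ {x | m x = 0} ∧ μ {x | m x ≠ m' x} ≤ 2 * n * μ C' := by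
  induction n generalizing C with
  | zero =>
    exact ⟨m, C, hm, hC, subset_rfl, hC0, hCn, fun _ _ => rfl, fun x hx => ⟨x, hx, rfl⟩, rfl,
      by simp⟩
  | succ n ih =>
    have hAn := hD.measurableSet_alternatingReach hm n
    by_cases hCA : μ (C ∩ alternatingReach D h m n) = 0
    swap
    · obtain ⟨m', C', h1, h2, h3, h4, h5, h6, h7, h8, h9⟩ :=
        ih (hC.inter hAn) inter_subset_right hCA
      refine ⟨m', C', h1, h2, h3.trans inter_subset_left, h4, h5,
        fun x hx => h6 x fun hx' => hx (Or.inl hx'), h7, h8, h9.trans ?_⟩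
      gcongr
      exact Nat.le_succ n
    set A := alternatingReach D h m n with hA
    have hUA : {x | m x = 0} ⊆ A := setOf_eq_zero_subset_alternatingReach n
    let g : X → Y := fun x => h (m x) x
    have hg : Measurable g := hm.measurable_apply hD.measurable
    have hpos : μ (C \ A) ≠ 0 := by
      intro h0
      refine hC0 (measure_mono_null (t := (C ∩ A) ∪ (C \ A)) ?_ (measure_union_null hCA h0))
      rw [inter_union_sdiff]
    have hcov : C \ A ⊆ ⋃ a, (C \ A) ∩ g ⁻¹' (h a '' (A ∩ D a)) := by
      intro x hx
      obtain h1 | ⟨_, h2⟩ := hCn hx.1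
      · exact absurd h1 hx.2
      · obtain ⟨a, ha⟩ := mem_iUnion.1 h2
        exact mem_iUnion.2 ⟨a, hx, ha⟩
    obtain ⟨a, ha⟩ : ∃ a, μ ((C \ A) ∩ g ⁻¹' (h a '' (A ∩ D a))) ≠ 0 := by
      by_contra! hcon
      exact hpos (measure_mono_null hcov (measure_iUnion_null hcon))
    set Ca := (C \ A) ∩ g ⁻¹' (h a '' (A ∩ D a)) with hCa
    have hCam : MeasurableSet Ca := (hC.diff hAn).inter
      (hg (hD.measurableSet_image (hAn.inter (hD.measurableSet a)) inter_subset_right))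
    have hCa0 : ∀ x ∈ Ca, m x ≠ 0 := fun x hx h0 => hx.1.2 (hUA h0)
    have hgCa : MeasurableSet (g '' Ca) :=
      hCam.image_of_measurable_injOn hg (hm.injOn.mono hCa0)
    let E := A ∩ D a ∩ h a ⁻¹' (g '' Ca)
    have hE : MeasurableSet E := (hAn.inter (hD.measurableSet a)).inter (hD.measurable a hgCa)
    have hED : E ⊆ D a := fun x hx => hx.1.2
    have hEim : h a '' E = g '' Ca := by
      rw [image_inter_preimage]
      refine inter_eq_right.2 ?_
      rintro _ ⟨x, hx, rfl⟩
      exact hx.2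
    have hE0 : μ E ≠ 0 := by
      rw [hD.measure_image hE hED, hEim, ← hm.measure_image hD hCam hCa0]
      exact ha
    obtain ⟨m', E', h1, h2, h3, h4, h5, h6, h7, h8, h9⟩ := ih hE (fun x hx => hx.1.1) hE0
    have hE'D : E' ⊆ D a := h3.trans hED
    let C' := Ca ∩ g ⁻¹' (h a '' E')
    have hC' : MeasurableSet C' := hCam.inter (hg (hD.measurableSet_image h2 hE'D))
    have hC'0 : ∀ x ∈ C', m x ≠ 0 := fun x hx => hCa0 x hx.1
    have hC'im : g '' C' = h a '' E' := by
      rw [image_inter_preimage, ← hEim]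
      exact inter_eq_right.2 (image_mono h3)
    have hμ : μ C' = μ E' := by
      rw [hm.measure_image hD hC' hC'0, hD.measure_image h2 hE'D]
      exact congrArg ν hC'im
    have hC'A : ∀ x ∈ C', x ∉ A := fun x hx => hx.1.1.2
    have hm'C' : ∀ x ∈ C', m' x = m x := fun x hx => h6 x (hC'A x hx)
    have hdisj : Disjoint E' C' :=
      Set.disjoint_left.2 fun x hx hx' => hC'A x hx' (h3 hx).1.1
    have ha0 : a ≠ 0 := by
      rintro rfl
      obtain ⟨x, hx⟩ := nonempty_of_measure_ne_zero h4
      simpa [hD.zero] using hE'D hx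
    have hsource : ∀ x ∈ E', ∃ z ∈ C', g z = h a x := fun x hx =>
      hC'im.ge (mem_image_of_mem _ hx)
    refine ⟨_root_.reassign m' E' C' a, C', h1.reassign h2 hC' hE'D (hD.injOn a) ?_, hC',
      fun x hx => hx.1.1.1, hμ ▸ h4, ?_, ?_, ?_, ?_, ?_⟩
    · intro x hx x' _ hx' hx'0 heq
      obtain ⟨z, hz, hzx⟩ := hsource x hx
      refine hx' ((h1.inj x' z hx'0 ?_ ?_) ▸ hz)
      · rw [hm'C' z hz]
        exact hC'0 z hz
      · rw [hm'C' z hz, heq, ← hzx]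
    · exact fun x hx => reassign_of_notMem_of_mem (hdisj.notMem_of_mem_right hx) hx
    · intro x hx
      rw [reassign_of_notMem (fun hx' => hx (Or.inl (h3 hx').1.1))
        (fun hx' => hx (hCn hx'.1.1.1))]
      exact h6 x fun hx' => hx (Or.inl hx')
    · intro x hx
      by_cases hxE : x ∈ E'
      · obtain ⟨z, hz, hzx⟩ := hsource x hxE
        rw [reassign_of_mem hxE]
        exact ⟨z, hC'0 z hz, hzx⟩
      · by_cases hxC : x ∈ C'
        · exact absurd (reassign_of_notMem_of_mem hxE hxC) hx
        · rw [reassign_of_notMem hxE hxC] at hx ⊢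
          exact h7 x hx
    · have h5' : E' ⊆ {x | m' x = 0} := h5
      rw [setOf_reassign_eq_zero ha0 hdisj, measure_union _ hC', hμ,
        measure_sdiff h5' h2.nullMeasurableSet (measure_ne_top _ _),
        tsub_add_cancel_of_le (measure_mono h5'), h8]
      refine Set.disjoint_left.2 fun x hx hx' => hC'0 x hx' ?_
      rw [← hm'C' x hx']
      exact hx.1
    · calc μ {x | m x ≠ _root_.reassign m' E' C' a x}
          ≤ μ ({x | m x ≠ m' x} ∪ (E' ∪ C')) := by
            refine measure_mono fun x hx => ?_
            by_cases hx' : m x = m' x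
            · refine Or.inr (setOf_ne_reassign_subset (m := m') (a := a) ?_)
              rw [mem_ofPred_eq, ← hx']
              exact hx
            · exact Or.inl hx'
        _ ≤ 2 * n * μ E' + (μ E' + μ C') := (measure_union_le _ _).trans
            (add_le_add h9 (measure_union_le _ _))
        _ = 2 * (n + 1 : ℕ) * μ C' := by
            rw [hμ]
            push_cast
            ring

/-- If the neighbourhood of the points reached by alternating paths of length `n` is not
essentially covered by the matching, then the matching can be enlarged. -/
theorem IsMatching.exists_augment (hD : IsMeasurePreservingFamily D h μ ν) [IsFiniteMeasure μ]
    (hm : IsMatching D h m) (n : ℕ)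
    (hν : ν (neighbors D h (alternatingReach D h m n) \
      (fun x => h (m x) x) '' {x | m x ≠ 0}) ≠ 0) :
    ∃ (m' : X → ℕ) (δ : ℝ≥0∞), IsMatching D h m' ∧ δ ≠ 0 ∧
      μ {x | m' x = 0} + δ = μ {x | m x = 0} ∧ μ {x | m x ≠ m' x} ≤ (2 * n + 1) * δ := by
  set A := alternatingReach D h m n with hA
  have hAn : MeasurableSet A := hD.measurableSet_alternatingReach hm n
  set ran := (fun x => h (m x) x) '' {x | m x ≠ 0} with hran
  have hranm : MeasurableSet ran :=
    (hm.measurable (measurableSet_singleton 0)).compl.image_of_measurable_injOn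
      (hm.measurable_apply hD.measurable) hm.injOn
  obtain ⟨a, ha⟩ : ∃ a, ν (h a '' (A ∩ D a) \ ran) ≠ 0 := by
    by_contra! hcon
    rw [neighbors, iUnion_sdiff] at hν
    exact hν (measure_iUnion_null hcon)
  let C := A ∩ D a ∩ h a ⁻¹' ranᶜ
  have hC : MeasurableSet C := (hAn.inter (hD.measurableSet a)).inter (hD.measurable a hranm.compl)
  have hC0 : μ C ≠ 0 := by
    rw [hD.measure_image hC fun x hx => hx.1.2, image_inter_preimage]
    exact ha
  obtain ⟨m', C', h1, h2, h3, h4, h5, -, h7, h8, h9⟩ :=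
    hm.exists_free hD n hC (fun x hx => hx.1.1) hC0
  have hC'D : C' ⊆ D a := fun x hx => (h3 hx).1.2
  have ha0 : a ≠ 0 := by
    rintro rfl
    obtain ⟨x, hx⟩ := nonempty_of_measure_ne_zero h4
    simpa [hD.zero] using hC'D hx
  refine ⟨_root_.reassign m' C' ∅ a, μ C', h1.reassign h2 .empty hC'D (hD.injOn a) ?_, h4, ?_, ?_⟩
  · intro x hx x' _ _ hx' heq
    obtain ⟨z, hz, hzx⟩ := h7 x' hx'
    exact (h3 hx).2 ⟨z, hz, hzx.trans heq⟩
  · have h5' : C' ⊆ {x | m' x = 0} := h5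
    rw [setOf_reassign_eq_zero ha0 (disjoint_empty _), union_empty,
      measure_sdiff h5' h2.nullMeasurableSet (measure_ne_top _ _),
      tsub_add_cancel_of_le (measure_mono h5'), h8]
  · calc μ {x | m x ≠ _root_.reassign m' C' ∅ a x}
        ≤ μ ({x | m x ≠ m' x} ∪ C') := by
          refine measure_mono fun x hx => ?_
          by_cases hx' : m x = m' x
          · have : x ∈ C' ∪ ∅ := by
              refine setOf_ne_reassign_subset (m := m') (a := a) ?_
              rw [mem_ofPred_eq, ← hx']
              exact hx
            rw [union_empty] at this
            exact Or.inr this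
          · exact Or.inl hx'
      _ ≤ 2 * n * μ C' + μ C' := (measure_union_le _ _).trans (add_le_add_left h9 _)
      _ = (2 * n + 1) * μ C' := by ring

/-- In an expansive family, some alternating paths from a non-null unmatched set escape
the range of the matching. -/
theorem IsMatching.exists_measure_neighbors_ne_zero (hD : IsMeasurePreservingFamily D h μ ν)
    [IsProbabilityMeasure μ] (hm : IsMatching D h m) {c : ℝ≥0∞}
    (hc : ∀ A, MeasurableSet A → c * μ A ≤ ν (neighbors D h A)) {N : ℕ}
    (hN : 1 < c ^ N * μ {x | m x = 0}) :
    ∃ n < N, ν (neighbors D h (alternatingReach D h m n) \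
      (fun x => h (m x) x) '' {x | m x ≠ 0}) ≠ 0 := by
  by_contra! hcon
  have key : ∀ n ≤ N, c ^ n * μ {x | m x = 0} ≤ μ (alternatingReach D h m n) := by
    intro n
    induction n with
    | zero => simp [alternatingReach]
    | succ n ih =>
      intro hn
      have hAn := hD.measurableSet_alternatingReach hm n
      have hB := hD.measurableSet_neighbors hAn
      set B := neighbors D h (alternatingReach D h m n) with hBdef
      set S := {x | m x ≠ 0 ∧ h (m x) x ∈ B} with hS
      have hSm : MeasurableSet S := (hm.measurable (measurableSet_singleton 0)).compl.inter
        (hm.measurable_apply hD.measurable hB)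
      calc c ^ (n + 1) * μ {x | m x = 0} = c * (c ^ n * μ {x | m x = 0}) := by ring
        _ ≤ c * μ (alternatingReach D h m n) := by gcongr; exact ih (by omega)
        _ ≤ ν B := hc _ hAn
        _ ≤ ν ((fun x => h (m x) x) '' S ∪ (B \ (fun x => h (m x) x) '' {x | m x ≠ 0})) := by
          refine measure_mono fun y hy => ?_
          by_cases hy' : y ∈ (fun x => h (m x) x) '' {x | m x ≠ 0}
          · obtain ⟨x, hx, rfl⟩ := hy'
            exact Or.inl ⟨x, ⟨hx, hy⟩, rfl⟩
          · exact Or.inr ⟨hy, hy'⟩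
        _ ≤ ν ((fun x => h (m x) x) '' S) + 0 :=
          (measure_union_le _ _).trans (by rw [hcon n (by omega)])
        _ = μ S := by rw [add_zero, ← hm.measure_image hD hSm fun x hx => hx.1]
        _ ≤ μ (alternatingReach D h m (n + 1)) := measure_mono subset_union_right
  exact absurd (hN.trans_le ((key N le_rfl).trans prob_le_one)) (lt_irrefl _)

end Matching

section Limit

open Filter Topology

variable {X Y : Type*} [MeasurableSpace X] {D : ℕ → Set X} {h : ℕ → X → Y}

/-- Matchings whose successive differences have summable measure converge. -/
theorem IsMatching.exists_tendsto (μ : Measure X) {m : ℕ → X → ℕ}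
    (hm : ∀ k, IsMatching D h (m k)) (hsum : ∑' k, μ {x | m k x ≠ m (k + 1) x} ≠ ∞) :
    ∃ m', IsMatching D h m' ∧ Tendsto (fun k => μ {x | m k x ≠ m' x}) atTop (𝓝 0) := by
  classical
  have hex : ∀ x, ∃ a, (a ≠ 0 → ∀ᶠ k in atTop, m k x = a) ∧
      ∀ b, (∀ᶠ k in atTop, m k x = b) → a = b := by
    intro x
    by_cases hx : ∃ a, ∀ᶠ k in atTop, m k x = a
    · obtain ⟨a, ha⟩ := hx
      refine ⟨a, fun _ => ha, fun b hb => ?_⟩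
      obtain ⟨k, hk, hk'⟩ := (ha.and hb).exists
      exact hk.symm.trans hk'
    · exact ⟨0, fun h0 => absurd rfl h0, fun b hb => absurd ⟨b, hb⟩ hx⟩
  choose m' hm' huniq using hex
  have hmeas : ∀ a, a ≠ 0 → MeasurableSet (m' ⁻¹' {a}) := by
    intro a ha
    have : m' ⁻¹' {a} = ⋃ n, ⋂ k ≥ n, m k ⁻¹' {a} := by
      ext x
      simp only [mem_iUnion, mem_iInter, mem_preimage, mem_singleton_iff, ← eventually_atTop]
      exact ⟨fun hx => hx ▸ hm' x (hx ▸ ha), huniq x a⟩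
    rw [this]
    exact .iUnion fun n => .iInter fun k => .iInter fun _ =>
      (hm k).measurable (measurableSet_singleton a)
  refine ⟨m', ⟨?_, ?_, ?_⟩, ?_⟩
  · refine measurable_to_countable' fun a => ?_
    by_cases ha : a = 0
    · have : m' ⁻¹' {a} = (⋃ b, m' ⁻¹' {b + 1})ᶜ := by
        ext x
        simp only [ha, mem_preimage, mem_singleton_iff, mem_compl_iff, mem_iUnion]
        rw [Nat.exists_eq_add_one]
        omega
      rw [this]
      exact (MeasurableSet.iUnion fun b => hmeas (b + 1) b.succ_ne_zero).compl
    · exact hmeas a ha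
  · intro x hx
    obtain ⟨k, hk⟩ := (hm' x hx).exists
    exact hk ▸ (hm k).mem x (hk ▸ hx)
  · intro x x' hx hx' heq
    obtain ⟨k, hk, hk'⟩ := ((hm' x hx).and (hm' x' hx')).exists
    refine (hm k).inj x x' ?_ ?_ ?_
    · rwa [hk]
    · rwa [hk']
    · rwa [hk, hk']
  · refine tendsto_of_tendsto_of_tendsto_of_le_of_le tendsto_const_nhds
      (ENNReal.tendsto_sum_nat_add _ hsum) (fun k => bot_le) fun k => ?_
    refine (measure_mono ?_).trans (measure_iUnion_le _)
    intro x hx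
    by_contra hcon
    simp only [mem_iUnion, mem_ofPred_eq, not_exists, not_not] at hcon
    refine hx (huniq x _ ?_).symm
    filter_upwards [eventually_ge_atTop k] with n hn
    induction n, hn using Nat.le_induction with
    | base => rfl
    | succ n hn ih =>
      have := hcon (n - k)
      rw [Nat.sub_add_cancel hn] at this
      rw [← this, ih]

end Limit

/-- The Brezis–Browder ordering principle. -/
theorem exists_forall_rel_eq_of_forall_seq_bounded {α : Type*} [Nonempty α] {r : α → α → Prop}
    (hrefl : ∀ a, r a a) (htrans : ∀ a b c, r a b → r b c → r a c) {φ : α → ℝ}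
    (hφ : ∀ a, 0 ≤ φ a) (hmono : ∀ a b, r a b → φ b ≤ φ a)
    (hbdd : ∀ u : ℕ → α, (∀ k, r (u k) (u (k + 1))) → ∃ b, ∀ k, r (u k) b) :
    ∃ a, ∀ b, r a b → φ b = φ a := by
  have hnext : ∀ (k : ℕ) (a : α), ∃ b, r a b ∧ ∀ c, r a c → φ b ≤ φ c + 1 / ((k : ℝ) + 1) := by
    intro k a
    have hbd : BddBelow (φ '' {b | r a b}) := ⟨0, by rintro _ ⟨b, -, rfl⟩; exact hφ b⟩
    obtain ⟨_, ⟨b, hb, rfl⟩, hlt⟩ := exists_lt_of_csInf_lt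
      (⟨_, a, hrefl a, rfl⟩ : (φ '' {b | r a b}).Nonempty)
      (lt_add_of_pos_right _ (Nat.one_div_pos_of_nat (α := ℝ) (n := k)))
    refine ⟨b, hb, fun c hc => hlt.le.trans ?_⟩
    gcongr
    exact csInf_le hbd ⟨c, hc, rfl⟩
  choose next hr hnext using hnext
  let u : ℕ → α := fun k => Nat.rec (Classical.arbitrary α) next k
  obtain ⟨b, hb⟩ := hbdd u fun k => hr k (u k)
  refine ⟨b, fun c hc => (hmono b c hc).antisymm ?_⟩
  refine le_of_forall_pos_le_add fun ε hε => ?_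
  obtain ⟨k, hk⟩ := exists_nat_one_div_lt hε
  have h1 : φ (u (k + 1)) ≤ φ c + 1 / ((k : ℝ) + 1) :=
    hnext k (u k) c (htrans _ _ _ (hb k) hc)
  linarith [hmono _ _ (hb (k + 1))]

theorem exists_pow_mul_gt_one_and_mul_sqrt_le {c : ℝ} (hc : 1 < c) :
    ∃ K : ℝ, ∀ u : ℝ, 0 < u → u ≤ 1 →
      ∃ N : ℕ, 1 < c ^ N * u ∧ (2 * N + 1) * (2 * √u) ≤ K := by
  obtain ⟨s, hs⟩ := pow_unbounded_of_one_lt 4 hc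
  refine ⟨8 * s + 2, fun u hu hu1 => ?_⟩
  have hsq : 0 < √u := Real.sqrt_pos.2 hu
  have hsq1 : √u ≤ 1 := Real.sqrt_le_one.2 hu1
  have hmul : √u * √u = u := Real.mul_self_sqrt hu.le
  obtain ⟨t, ht, ht'⟩ : ∃ t : ℕ, 1 ≤ t * √u ∧ t * √u ≤ 2 := by
    refine ⟨⌈1 / √u⌉₊, ?_, ?_⟩
    · rw [← div_le_iff₀ hsq]
      exact Nat.le_ceil _
    · have := (Nat.ceil_lt_add_one (one_div_pos.2 hsq).le).le
      calc _ ≤ (1 / √u + 1) * √u := by gcongr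
        _ = 1 + √u := by field_simp
        _ ≤ 2 := by linarith
  refine ⟨s * t, ?_, ?_⟩
  · have h2 : (t : ℝ) < 2 ^ t := by exact_mod_cast Nat.lt_two_pow_self
    have h3 : 1 < 2 ^ t * √u := ht.trans_lt (by gcongr)
    calc (1 : ℝ) < (2 ^ t * √u) * (2 ^ t * √u) := one_lt_mul_of_lt_of_le h3 h3.le
      _ = 4 ^ t * u := by rw [mul_mul_mul_comm, hmul, ← mul_pow]; norm_num
      _ ≤ c ^ (s * t) * u := by rw [pow_mul]; gcongr
  · push_cast
    have : (s : ℝ) * (t * √u) ≤ s * 2 := by gcongr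
    nlinarith

section Ekeland

open Filter Topology

theorem measureReal_setOf_ne_triangle {X : Type*} [MeasurableSpace X] (μ : Measure X) [IsFiniteMeasure μ] (m₁ m₂ m₃ : X → ℕ) :
    μ.real {x | m₁ x ≠ m₃ x} ≤ μ.real {x | m₁ x ≠ m₂ x} + μ.real {x | m₂ x ≠ m₃ x} := by
  refine (measureReal_mono fun x hx => ?_).trans (measureReal_union_le _ _)
  by_contra hcon
  simp only [mem_union, mem_ofPred_eq, not_or, not_not] at hcon
  exact hx (hcon.1.trans hcon.2)

theorem abs_measureReal_setOf_eq_zero_sub_le {X : Type*} [MeasurableSpace X] (μ : Measure X) [IsFiniteMeasure μ]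
    (m₁ m₂ : X → ℕ) :
    |μ.real {x | m₁ x = 0} - μ.real {x | m₂ x = 0}| ≤ μ.real {x | m₁ x ≠ m₂ x} := by
  have key : ∀ m₁ m₂ : X → ℕ,
      μ.real {x | m₁ x = 0} ≤ μ.real {x | m₂ x = 0} + μ.real {x | m₁ x ≠ m₂ x} := by
    intro m₁ m₂
    refine (measureReal_mono fun x (hx : m₁ x = 0) => ?_).trans (measureReal_union_le _ _)
    by_cases h2 : m₂ x = 0
    · exact Or.inl h2
    · exact Or.inr fun h => h2 (h ▸ hx)
  have h2 := key m₂ m₁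
  simp only [ne_comm (a := m₂ _)] at h2
  rw [abs_sub_le_iff]
  constructor <;> linarith [key m₁ m₂]

variable {X Y : Type*} [MeasurableSpace X] [StandardBorelSpace X] [MeasurableSpace Y]
  [StandardBorelSpace Y] {D : ℕ → Set X} {h : ℕ → X → Y} {μ : Measure X} {ν : Measure Y}

theorem IsMeasurePreservingFamily.exists_augment_sqrt (hD : IsMeasurePreservingFamily D h μ ν)
    [IsProbabilityMeasure μ] {c : ℝ≥0∞} (hc1 : 1 < c)
    (hc : ∀ A, MeasurableSet A → c * μ A ≤ ν (neighbors D h A)) :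
    ∃ K : ℝ, ∀ m, IsMatching D h m → μ.real {x | m x = 0} ≠ 0 → ∃ m', IsMatching D h m' ∧
      μ.real {x | m' x = 0} < μ.real {x | m x = 0} ∧ μ.real {x | m x ≠ m' x} ≤
        K * (√(μ.real {x | m x = 0}) - √(μ.real {x | m' x = 0})) := by
  obtain ⟨c', hc1', hcc'⟩ := ENNReal.lt_iff_exists_nnreal_btwn.1 hc1
  obtain ⟨K, hK⟩ := exists_pow_mul_gt_one_and_mul_sqrt_le
    (c := c') (by exact_mod_cast hc1')
  refine ⟨K, fun m hm hm0 => ?_⟩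
  have hpos : 0 < μ.real {x | m x = 0} := measureReal_nonneg.lt_of_ne' hm0
  obtain ⟨N, hN, hNK⟩ := hK _ hpos measureReal_le_one
  have hN' : 1 < (c' : ℝ≥0∞) ^ N * μ {x | m x = 0} := by
    rw [← ofReal_measureReal, ← ENNReal.ofReal_coe_nnreal, ← ENNReal.ofReal_pow (by simp),
      ← ENNReal.ofReal_mul (by positivity), ← ENNReal.ofReal_one]
    exact ENNReal.ofReal_lt_ofReal_iff'.2 ⟨hN, by positivity⟩
  obtain ⟨n, hn, hν⟩ := hm.exists_measure_neighbors_ne_zero hD (c := c')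
    (fun A hA => le_trans (by gcongr) (hc A hA)) hN'
  obtain ⟨m', δ, hm', hδ, hsum, hle⟩ := hm.exists_augment hD n hν
  have hδtop : δ ≠ ∞ := ne_top_of_le_ne_top (measure_ne_top μ _) (hsum ▸ le_add_self)
  have hδpos : 0 < δ.toReal := ENNReal.toReal_pos hδ hδtop
  have hsum' : μ.real {x | m' x = 0} + δ.toReal = μ.real {x | m x = 0} := by
    rw [measureReal_def, measureReal_def, ← hsum, ENNReal.toReal_add (measure_ne_top _ _) hδtop]
  have hle' : μ.real {x | m x ≠ m' x} ≤ (2 * n + 1) * δ.toReal := by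
    have := ENNReal.toReal_mono (by finiteness) hle
    rw [ENNReal.toReal_mul, ENNReal.toReal_add (by finiteness) (by finiteness)] at this
    simpa [measureReal_def] using this
  refine ⟨m', hm', by linarith, hle'.trans ?_⟩
  set p := μ.real {x | m x = 0}
  set q := μ.real {x | m' x = 0}
  have hq : 0 ≤ q := measureReal_nonneg
  have hqp : √q ≤ √p := Real.sqrt_le_sqrt (by linarith)
  have h1 : δ.toReal ≤ 2 * √p * (√p - √q) := by
    have e1 := Real.mul_self_sqrt hpos.le
    have e2 := Real.mul_self_sqrt hq
    nlinarith
  calc (2 * n + 1) * δ.toReal ≤ (2 * N + 1) * (2 * √p * (√p - √q)) := by gcongr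
    _ = (2 * N + 1) * (2 * √p) * (√p - √q) := by ring
    _ ≤ K * (√p - √q) := by
      gcongr
theorem IsMeasurePreservingFamily.exists_isMatching_ae_ne_zero
    (hD : IsMeasurePreservingFamily D h μ ν) [IsProbabilityMeasure μ] {c : ℝ≥0∞} (hc1 : 1 < c)
    (hc : ∀ A, MeasurableSet A → c * μ A ≤ ν (neighbors D h A)) :
    ∃ m, IsMatching D h m ∧ μ {x | m x = 0} = 0 := by
  obtain ⟨K, hK⟩ := hD.exists_augment_sqrt hc1 hc
  let φ : {m : X → ℕ // IsMatching D h m} → ℝ := fun m => μ.real {x | m.1 x = 0}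
  let d : {m : X → ℕ // IsMatching D h m} → {m : X → ℕ // IsMatching D h m} → ℝ :=
    fun m m' => μ.real {x | m.1 x ≠ m'.1 x}
  have hφ : ∀ m, 0 ≤ φ m := fun _ => measureReal_nonneg
  have hd : ∀ m m', 0 ≤ d m m' := fun _ _ => measureReal_nonneg
  have htri : ∀ a b c, d a c ≤ d a b + d b c := fun a b c =>
    measureReal_setOf_ne_triangle μ a.1 b.1 c.1
  have hφd : ∀ a b, |φ a - φ b| ≤ d a b := fun a b =>
    abs_measureReal_setOf_eq_zero_sub_le μ a.1 b.1
  have : Nonempty {m : X → ℕ // IsMatching D h m} :=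
    ⟨⟨fun _ => 0, measurable_const, fun _ hx => absurd rfl hx, fun _ _ hx => absurd rfl hx⟩⟩
  have htrans : ∀ a b c, (φ b ≤ φ a ∧ d a b ≤ K * (√(φ a) - √(φ b))) →
      (φ c ≤ φ b ∧ d b c ≤ K * (√(φ b) - √(φ c))) →
      (φ c ≤ φ a ∧ d a c ≤ K * (√(φ a) - √(φ c))) := by
    rintro a b c ⟨h1, h2⟩ ⟨h3, h4⟩
    exact ⟨h3.trans h1, by linarith [htri a b c]⟩
  obtain ⟨m, hm⟩ := exists_forall_rel_eq_of_forall_seq_bounded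
    (r := fun a b => φ b ≤ φ a ∧ d a b ≤ K * (√(φ a) - √(φ b))) (φ := φ)
    (fun a => ⟨le_rfl, by simp [d]⟩) htrans hφ (fun a b hab => hab.1) (by
      intro u hu
      have hsum : Summable fun k => d (u k) (u (k + 1)) := by
        refine summable_of_sum_range_le (c := |K|) (fun k => hd _ _) fun n => ?_
        calc ∑ k ∈ Finset.range n, d (u k) (u (k + 1))
            ≤ ∑ k ∈ Finset.range n, K * (√(φ (u k)) - √(φ (u (k + 1)))) :=
              Finset.sum_le_sum fun k _ => (hu k).2
          _ = K * (√(φ (u 0)) - √(φ (u n))) := by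
            rw [← Finset.mul_sum, Finset.sum_range_sub' fun k => √(φ (u k))]
          _ ≤ |K| * |√(φ (u 0)) - √(φ (u n))| := (le_abs_self _).trans (abs_mul _ _).le
          _ ≤ |K| * 1 := by
            gcongr
            have h1 : √(φ (u 0)) ≤ 1 := Real.sqrt_le_one.2 measureReal_le_one
            have h2 : √(φ (u n)) ≤ 1 := Real.sqrt_le_one.2 measureReal_le_one
            rw [abs_sub_le_iff]
            constructor <;> linarith [Real.sqrt_nonneg (φ (u 0)), Real.sqrt_nonneg (φ (u n))]
          _ = |K| := mul_one _
      obtain ⟨b, hb, hlim⟩ := IsMatching.exists_tendsto μ (fun k => (u k).2) (by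
        have := hsum.tsum_ofReal_ne_top
        simpa only [d, measureReal_def, ENNReal.ofReal_toReal (measure_ne_top μ _)] using this)
      have hdlim : Tendsto (fun j => d (u j) ⟨b, hb⟩) atTop (𝓝 0) := by
        exact (ENNReal.tendsto_toReal ENNReal.zero_ne_top).comp hlim
      have hφlim : Tendsto (fun j => φ (u j)) atTop (𝓝 (φ ⟨b, hb⟩)) := by
        rw [tendsto_iff_dist_tendsto_zero]
        exact squeeze_zero (fun _ => dist_nonneg) (fun j => hφd _ _) hdlim
      refine ⟨⟨b, hb⟩, fun k => ?_⟩
      have hkj : ∀ j ≥ k, φ (u j) ≤ φ (u k) ∧ d (u k) (u j) ≤ K * (√(φ (u k)) - √(φ (u j))) := by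
        intro j hj
        induction j, hj using Nat.le_induction with
        | base => exact ⟨le_rfl, by simp [d]⟩
        | succ j _ ih => exact htrans _ _ _ ih (hu j)
      constructor
      · refine le_of_tendsto hφlim ?_
        filter_upwards [eventually_ge_atTop k] with j hj using (hkj j hj).1
      · have hR : Tendsto (fun j => K * (√(φ (u k)) - √(φ (u j))) + d (u j) ⟨b, hb⟩) atTop
            (𝓝 (K * (√(φ (u k)) - √(φ ⟨b, hb⟩)) + 0)) :=
          ((tendsto_const_nhds.sub hφlim.sqrt).const_mul K).add hdlim
        rw [add_zero] at hR
        refine ge_of_tendsto hR ?_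
        filter_upwards [eventually_ge_atTop k] with j hj
        linarith [htri (u k) (u j) ⟨b, hb⟩, (hkj j hj).2])
  refine ⟨m.1, m.2, ?_⟩
  by_contra h0
  obtain ⟨m', hm', hlt, hle⟩ := hK m.1 m.2 ((measureReal_ne_zero_iff).2 h0)
  exact hlt.ne (hm ⟨m', hm'⟩ ⟨hlt.le, hle⟩)

end Ekeland

/-- **Lyons–Nazarov measurable matching.** If `X`, `Y` are standard Borel spaces, `μ` a Borel
probability measure on `X`, `ν` a Borel measure on `Y`, and `R ⊆ X × Y` is Borel, locally
finite, `(μ,ν)`-preserving and expansive, then there are a `μ`-conull Borel set `X' ⊆ X` and a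
Borel injection `f : X' → Y` compatible with `R`. -/
theorem stmt0 {X Y : Type*} [MeasurableSpace X] [StandardBorelSpace X]
    [MeasurableSpace Y] [StandardBorelSpace Y]
    (μ : Measure X) [IsProbabilityMeasure μ] (ν : Measure Y)
    (R : Set (X × Y)) (hR : MeasurableSet R)
    (hlocX : ∀ x : X, {y | (x, y) ∈ R}.Finite)
    (hlocY : ∀ y : Y, {x | (x, y) ∈ R}.Finite)
    (hpres : MeasurePreservingRel R μ ν)
    (hexp : ∃ c : ℝ≥0∞, 1 < c ∧ ∀ A : Set X, MeasurableSet A →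
      c * μ A ≤ ν {y | ∃ x ∈ A, (x, y) ∈ R}) :
    ∃ X' : Set X, MeasurableSet X' ∧ μ X'ᶜ = 0 ∧
      ∃ f : X → Y, Measurable f ∧ Set.InjOn f X' ∧ ∀ x ∈ X', (x, f x) ∈ R := by
  classical
  obtain ⟨c, hc1, hc⟩ := hexp
  have hYne : Nonempty Y := by
    by_contra hY
    rw [not_nonempty_iff] at hY
    have h1 := hc univ .univ
    rw [Set.eq_empty_of_isEmpty {y | ∃ x ∈ univ, (x, y) ∈ R}, measure_empty, measure_univ,
      mul_one] at h1
    exact absurd (hc1.trans_le h1) (by simp)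
  obtain ⟨D, h, hDm, hhm, hinj, hDR, hD0, hae⟩ :=
    exists_seq_measurable_injOn_of_finite_sections μ hR hlocX hlocY
  have hD : IsMeasurePreservingFamily D h μ ν := by
    refine ⟨hDm, hhm, hinj, hD0, fun A g hA hg hgA hgD => hpres A g hA hg hgA fun x hx => ?_⟩
    obtain ⟨n, hn, hgn⟩ := hgD x hx
    exact hgn ▸ hDR n x hn
  obtain ⟨S, hS, hSm, hS0⟩ := exists_measurable_superset_of_null hae
  obtain ⟨m, hm, hm0⟩ := hD.exists_isMatching_ae_ne_zero hc1 (fun A hA => by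
    rw [← measure_sdiff_null hS0]
    refine (hc (A \ S) (hA.diff hSm)).trans (measure_mono ?_)
    rintro y ⟨x, hx, hxy⟩
    have hx' : ∀ y, (x, y) ∈ R → ∃ n, x ∈ D n ∧ h n x = y := by
      by_contra hcon
      exact hx.2 (hS hcon)
    obtain ⟨n, hn, rfl⟩ := hx' y hxy
    exact mem_iUnion.2 ⟨n, x, ⟨hx.1, hn⟩, rfl⟩)
  have hUm : MeasurableSet {x | m x = 0} := hm.measurable (measurableSet_singleton 0)
  exact ⟨{x | m x = 0}ᶜ, hUm.compl, by rwa [compl_compl], fun x => h (m x) x,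
    hm.measurable_apply hhm, hm.injOn, fun x hx => hDR _ x (hm.mem x hx)⟩
end

section
/- Let X and Y be standard Borel spaces, μ a Borel probability measure on X, ν a Borel measure on Y, and R ⊆ X × Y a Borel, locally finite, (μ,ν)-preserving set. Suppose g is a Borel partial injection from X to Y compatible with R, and let n ≥ 1. Then there is a Borel partial injection g' from X to Y compatible with R such that: dom(g') ⊇ dom(g); g' admits no g'-augmenting paths of length less than n; and μ({x ∈ dom(g') : x ∉ dom(g) or g'(x) ≠ g(x)}) ≤ n·μ(X ∖ dom(g)). -/
open MeasureTheory Set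
open scoped ENNReal

/-- A `g`-augmenting path of length `n` for a partial injection `g` with domain `D`,
relative to `R ⊆ X × Y`: a sequence `(x_0, y_0, …, x_n, y_n)` such that `x_0 ∉ dom(g)`,
the `y_i` are pairwise distinct, `(x_i, y_i) ∈ R` for all `i`, `y_i = g(x_{i+1})` for all
`i < n`, and `y_n` is not in the image of `g`. -/
def IsAugPath {X Y : Type*} (R : Set (X × Y)) (D : Set X) (g : X → Y) (n : ℕ)
    (x : Fin (n + 1) → X) (y : Fin (n + 1) → Y) : Prop :=
  x 0 ∉ D ∧ Function.Injective y ∧ (∀ i, (x i, y i) ∈ R) ∧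
    (∀ i : Fin n, x i.succ ∈ D ∧ g (x i.succ) = y i.castSucc) ∧
    y (Fin.last n) ∉ g '' D

/-- A sequence of sets is Borel separated if it can be enlarged to a sequence of measurable sets
with empty intersection. -/
def SeqMeasurablySeparable {Z : Type*} [MeasurableSpace Z] (A : ℕ → Set Z) : Prop :=
  ∃ B : ℕ → Set Z, (∀ n, MeasurableSet (B n)) ∧ (∀ n, A n ⊆ B n) ∧ ⋂ n, B n = ∅

theorem SeqMeasurablySeparable.of_update {Z : Type*} [MeasurableSpace Z] {A : ℕ → Set Z} (i : ℕ)
    {A' : ℕ → ℕ → Set Z} (hne : ∀ m n, n ≠ i → A n ⊆ A' m n) (hi : A i ⊆ ⋃ m, A' m i)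
    (h : ∀ m, SeqMeasurablySeparable (A' m)) : SeqMeasurablySeparable A := by
  choose B hB hAB hB0 using h
  refine ⟨fun n => if n = i then ⋃ m, B m i else ⋂ m, B m n, fun n => ?_, fun n => ?_, ?_⟩
  · dsimp only
    split_ifs
    · exact .iUnion fun m => hB m i
    · exact .iInter fun m => hB m n
  · dsimp only
    split_ifs with hn
    · subst hn
      exact hi.trans (iUnion_mono fun m => hAB m n)
    · exact subset_iInter fun m => (hne m n hn).trans (hAB m n)
  · refine eq_empty_of_forall_notMem fun z hz => ?_
    rw [mem_iInter] at hz
    have h1 := hz i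
    simp only [if_true, mem_iUnion] at h1
    obtain ⟨m, hm⟩ := h1
    refine Set.Nonempty.ne_empty ⟨z, mem_iInter.2 fun n => ?_⟩ (hB0 m)
    by_cases hn : n = i
    · exact hn ▸ hm
    · have h2 := hz n
      simp only [if_neg hn, mem_iInter] at h2
      exact h2 m

/-- **Novikov separation theorem**: a sequence of analytic sets with empty intersection is
Borel separated. -/
theorem seqMeasurablySeparable_of_analyticSet {Z : Type*} [TopologicalSpace Z] [T2Space Z]
    [MeasurableSpace Z] [OpensMeasurableSpace Z] {A : ℕ → Set Z}
    (hA : ∀ n, AnalyticSet (A n)) (h0 : ⋂ n, A n = ∅) : SeqMeasurablySeparable A := by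
  by_cases hemp : ∃ i, A i = ∅
  · obtain ⟨i, hi⟩ := hemp
    refine ⟨fun n => if n = i then ∅ else univ, fun n => ?_, fun n => ?_, ?_⟩
    · dsimp only
      split_ifs <;> simp
    · dsimp only
      split_ifs with hn
      · rw [hn, hi]
      · exact subset_univ _
    · refine eq_empty_of_forall_notMem fun z hz => ?_
      simpa using mem_iInter.1 hz i
  have hf : ∀ n, ∃ f : (ℕ → ℕ) → Z, Continuous f ∧ range f = A n := fun n => by
    have h := hA n
    rw [AnalyticSet] at h
    exact h.resolve_left fun h => hemp ⟨n, h⟩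
  choose f hfc hfA using hf
  by_contra hsep
  let C : ℕ → (ℕ → ℕ) → ℕ → Set Z := fun t z n =>
    f n '' {x | ∀ i, Nat.pair n i < t → x i = z (Nat.pair n i)}
  have hC0 : ∀ z, ¬ SeqMeasurablySeparable (C 0 z) := fun z => by
    have : C 0 z = A := by
      ext1 n
      simp [C, hfA]
    rwa [this]
  have hstep : ∀ t z, ¬ SeqMeasurablySeparable (C t z) →
      ∃ m, ¬ SeqMeasurablySeparable (C (t + 1) (Function.update z t m)) := by
    intro t z hz
    by_contra! hall
    refine hz (.of_update (Nat.unpair t).1 (fun m n hn => ?_) ?_ hall)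
    · refine image_mono fun x hx i hi => ?_
      have hne : Nat.pair n i ≠ t := by
        rintro rfl
        simp at hn
      rw [Function.update_of_ne hne]
      exact hx i (by omega)
    · rintro _ ⟨x, hx, rfl⟩
      refine mem_iUnion.2 ⟨x (Nat.unpair t).2, x, fun i hi => ?_, rfl⟩
      by_cases heq : Nat.pair (Nat.unpair t).1 i = t
      · have hi2 : (Nat.unpair t).2 = i := by
          conv_lhs => rw [← heq, Nat.unpair_pair]
        rw [heq, Function.update_self, hi2]
      · rw [Function.update_of_ne heq]
        exact hx i (by omega)
  choose! e he using hstep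
  let s : ℕ → ℕ → ℕ := fun t => Nat.rec (fun _ => 0) (fun t z => Function.update z t (e t z)) t
  have hs : ∀ t, s (t + 1) = Function.update (s t) t (e t (s t)) := fun t => rfl
  have hsn : ∀ t, ¬ SeqMeasurablySeparable (C t (s t)) := by
    intro t
    induction t with
    | zero => exact hC0 _
    | succ t ih => rw [hs]; exact he t _ ih
  have hstab : ∀ i d, s (i + 1 + d) i = s (i + 1) i := by
    intro i d
    induction d with
    | zero => rfl
    | succ d ih =>
      rw [← add_assoc, hs, Function.update_of_ne (by omega), ih]
  let w : ℕ → ℕ := fun i => s (i + 1) i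
  have hw : ∀ t i, i < t → s t i = w i := by
    intro t i hi
    obtain ⟨d, rfl⟩ := Nat.exists_eq_add_of_lt hi
    have := hstab i d
    rwa [add_right_comm] at this
  let p : ℕ → ℕ → ℕ := fun n i => w (Nat.pair n i)
  have hcyl : ∀ n (U : Set Z), IsOpen U → f n (p n) ∈ U → ∃ t₀, ∀ t, t₀ ≤ t → C t (s t) n ⊆ U := by
    intro n U hU hn
    obtain ⟨_, ⟨y, k, rfl⟩, hy, hsub⟩ :=
      (PiNat.isTopologicalBasis_cylinders (fun _ => ℕ)).exists_subset_of_mem_open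
        (show p n ∈ f n ⁻¹' U from hn) (hU.preimage (hfc n))
    obtain ⟨t₀, ht₀⟩ := ((Finset.range k).image fun i => Nat.pair n i).bddAbove
    refine ⟨t₀ + 1, fun t ht => ?_⟩
    rintro _ ⟨x, hx, rfl⟩
    refine hsub fun i hi => ?_
    have hlt : Nat.pair n i < t := by
      have := ht₀ (Finset.mem_coe.2 (Finset.mem_image_of_mem _ (Finset.mem_range.2 hi)))
      omega
    rw [hx i hlt, hw _ _ hlt]
    exact hy i hi
  by_cases heq : ∀ n, f n (p n) = f 0 (p 0)
  · refine (h0.subset (mem_iInter.2 fun n => ?_) : f 0 (p 0) ∈ (∅ : Set Z))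
    rw [← hfA n, ← heq n]
    exact mem_range_self _
  · push Not at heq
    obtain ⟨n, hn⟩ := heq
    obtain ⟨U, V, hU, hV, hnU, h0V, hUV⟩ := t2_separation hn
    obtain ⟨t₁, ht₁⟩ := hcyl n U hU hnU
    obtain ⟨t₂, ht₂⟩ := hcyl 0 V hV h0V
    have hn0 : n ≠ 0 := by
      rintro rfl
      exact hn rfl
    refine hsn (max t₁ t₂) ⟨fun k => if k = n then U else if k = 0 then V else univ,
      fun k => ?_, fun k => ?_, ?_⟩
    · dsimp only
      split_ifs
      exacts [hU.measurableSet, hV.measurableSet, .univ]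
    · dsimp only
      split_ifs with h1 h2
      · exact h1 ▸ ht₁ _ (le_max_left _ _)
      · exact h2 ▸ ht₂ _ (le_max_right _ _)
      · exact subset_univ _
    · refine eq_empty_of_forall_notMem fun z hz => ?_
      have hzU := mem_iInter.1 hz n
      have hzV := mem_iInter.1 hz 0
      simp only [if_true, if_neg hn0.symm] at hzU hzV
      exact disjoint_left.1 hUV hzU hzV

/-- A standard Borel space has a countable family of measurable sets isolating each point from
each finite set not containing it. -/
theorem exists_seq_measurableSet_isolating (Z : Type*) [MeasurableSpace Z]
    [StandardBorelSpace Z] :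
    ∃ U : ℕ → Set Z, (∀ n, MeasurableSet (U n)) ∧
      ∀ (z : Z) (F : Set Z), F.Finite → z ∉ F → ∃ n, z ∈ U n ∧ Disjoint (U n) F := by
  let := upgradeStandardBorel Z
  obtain ⟨U, hU⟩ := ((TopologicalSpace.countable_countableBasis Z).insert ∅).exists_eq_range
    (insert_nonempty _ _)
  have hb := TopologicalSpace.isBasis_countableBasis Z
  refine ⟨U, fun n => ?_, fun z F hF hz => ?_⟩
  · have hn : U n ∈ insert ∅ (TopologicalSpace.countableBasis Z) := hU ▸ mem_range_self n
    rcases hn with hn | hn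
    · exact hn ▸ .empty
    · exact (hb.isOpen hn).measurableSet
  obtain ⟨V, hV, hzV, hVF⟩ := hb.exists_subset_of_mem_open
    (show z ∈ Fᶜ from hz) hF.isClosed.isOpen_compl
  obtain ⟨n, rfl⟩ : V ∈ range U := hU ▸ mem_insert_of_mem _ hV
  exact ⟨n, hzV, disjoint_left.2 fun y hy => hVF hy⟩

/-- The projection of a Borel set with finite sections is Borel. -/
theorem MeasurableSet.image_fst_of_finite {X Y : Type*} [MeasurableSpace X] [StandardBorelSpace X]
    [MeasurableSpace Y] [StandardBorelSpace Y] {R : Set (X × Y)} (hR : MeasurableSet R)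
    (hfin : ∀ x, {y | (x, y) ∈ R}.Finite) : MeasurableSet (Prod.fst '' R) := by
  obtain ⟨U, hU, hUsep⟩ := exists_seq_measurableSet_isolating Y
  let Q : ℕ → Set ((X × Y) × Y) := fun n =>
    {q | q.1 ∈ R ∧ (q.1.2 ∉ U n ∨ q.2 ≠ q.1.2 ∧ (q.1.1, q.2) ∈ R ∧ q.2 ∈ U n)}
  have hQ : ∀ n, MeasurableSet (Q n) := fun n => by
    refine (measurable_fst hR).inter
      (((measurable_fst.snd) (hU n)).compl.union
        ((measurableSet_eq_fun measurable_snd measurable_fst.snd).compl.inter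
          (((measurable_fst.fst.prodMk measurable_snd) hR).inter (measurable_snd (hU n)))))
  let A : ℕ → Set (X × Y) := fun n => Prod.fst '' Q n
  let := upgradeStandardBorel X
  let := upgradeStandardBorel Y
  have hA : ∀ n, AnalyticSet (A n) := fun n => (hQ n).analyticSet_image measurable_fst
  have hA0 : ⋂ n, A n = ∅ := by
    refine eq_empty_of_forall_notMem fun ⟨x, y⟩ hz => ?_
    rw [mem_iInter] at hz
    obtain ⟨n, hyn, hn⟩ := hUsep y ({y' | (x, y') ∈ R} \ {y}) ((hfin x).subset sdiff_subset)
      (by simp)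
    obtain ⟨⟨⟨x', y'⟩, y''⟩, ⟨-, h⟩, heq⟩ := hz n
    obtain ⟨rfl, rfl⟩ := Prod.mk.inj heq
    rcases h with h | ⟨h1, h2, h3⟩
    · exact h hyn
    · exact disjoint_left.1 hn h3 ⟨h2, h1⟩
  obtain ⟨B, hB, hAB, hB0⟩ := seqMeasurablySeparable_of_analyticSet hA hA0
  have hcov : Prod.fst '' R = ⋃ n, Prod.fst '' (R \ B n) := by
    rw [← image_iUnion, ← sdiff_iInter, hB0, sdiff_empty]
  rw [hcov]
  refine .iUnion fun n => (hR.diff (hB n)).image_of_measurable_injOn measurable_fst ?_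
  rintro ⟨x, y⟩ ⟨hy, hyB⟩ ⟨x', y'⟩ ⟨hy', hyB'⟩ (rfl : x = x')
  have hyU : y ∈ U n := by
    by_contra h
    exact hyB (hAB n ⟨((x, y), y), ⟨hy, .inl h⟩, rfl⟩)
  have hyU' : y' ∈ U n := by
    by_contra h
    exact hyB' (hAB n ⟨((x, y'), y), ⟨hy', .inl h⟩, rfl⟩)
  by_contra hne
  have hne' : y' ≠ y := fun h => hne (by rw [h])
  exact hyB (hAB n ⟨((x, y), y'), ⟨hy, .inr ⟨hne', hy', hyU'⟩⟩, rfl⟩)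

/-- A symmetric Borel relation with finite sections on a Borel set `S` admits a Borel maximal
independent subset of `S`. -/
theorem exists_measurableSet_maximal_independent {Z : Type*} [MeasurableSpace Z]
    [StandardBorelSpace Z] {S : Set Z} {G : Set (Z × Z)} (hS : MeasurableSet S)
    (hG : MeasurableSet G) (hsymm : ∀ p q, (p, q) ∈ G → (q, p) ∈ G)
    (hfin : ∀ p ∈ S, {q | q ∈ S ∧ (p, q) ∈ G}.Finite) :
    ∃ T ⊆ S, MeasurableSet T ∧ (∀ p ∈ T, ∀ q ∈ T, (p, q) ∈ G → p = q) ∧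
      ∀ p ∈ S, p ∈ T ∨ ∃ q ∈ T, (p, q) ∈ G := by
  have hproj : ∀ H : Set (Z × Z), MeasurableSet H →
      MeasurableSet {p | ∃ q ∈ S, p ∈ S ∧ (p, q) ∈ G ∧ (p, q) ∈ H} := fun H hH => by
    have hK : MeasurableSet {r : Z × Z | r.1 ∈ S ∧ r.2 ∈ S ∧ r ∈ G ∧ r ∈ H} :=
      (measurable_fst hS).inter ((measurable_snd hS).inter (hG.inter hH))
    convert hK.image_fst_of_finite fun p => ?_ using 1
    · ext p
      constructor
      · rintro ⟨q, hq, hp, h1, h2⟩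
        exact ⟨(p, q), ⟨hp, hq, h1, h2⟩, rfl⟩
      · rintro ⟨⟨p, q⟩, ⟨hp, hq, h1, h2⟩, rfl⟩
        exact ⟨q, hq, hp, h1, h2⟩
    · by_cases hp : p ∈ S
      · exact (hfin p hp).subset fun q hq => ⟨hq.2.1, hq.2.2.1⟩
      · convert finite_empty
        exact eq_empty_of_forall_notMem fun q hq => hp hq.1
  obtain ⟨U, hU, hUsep⟩ := exists_seq_measurableSet_isolating Z
  let C : ℕ → Set Z := fun n =>
    (S ∩ U n) \ {p | ∃ q ∈ S, p ∈ S ∧ (p, q) ∈ G ∧ q ∈ U n ∧ q ≠ p}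
  have hC : ∀ n, MeasurableSet (C n) := fun n => by
    refine (hS.inter (hU n)).diff (hproj {r | r.2 ∈ U n ∧ r.2 ≠ r.1} ?_)
    exact (measurable_snd (hU n)).inter (measurableSet_eq_fun measurable_snd measurable_fst).compl
  have hcov : ∀ p ∈ S, ∃ n, p ∈ C n := fun p hp => by
    obtain ⟨n, hpn, hn⟩ := hUsep p ({q | q ∈ S ∧ (p, q) ∈ G} \ {p})
      ((hfin p hp).subset sdiff_subset) (by simp)
    refine ⟨n, ⟨hp, hpn⟩, ?_⟩
    rintro ⟨q, hq, -, hpq, hqn, hne⟩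
    exact disjoint_left.1 hn hqn ⟨⟨hq, hpq⟩, hne⟩
  let A : ℕ → Set Z := fun n =>
    Nat.rec ∅ (fun k B => B ∪ (C k \ {p | ∃ q ∈ S, p ∈ S ∧ (p, q) ∈ G ∧ q ∈ B})) n
  have hA : ∀ k, A (k + 1) = A k ∪ (C k \ {p | ∃ q ∈ S, p ∈ S ∧ (p, q) ∈ G ∧ q ∈ A k}) :=
    fun k => rfl
  have hAS : ∀ k, A k ⊆ S := fun k => by
    induction k with
    | zero => exact empty_subset _
    | succ k ih =>
      rw [hA]
      exact union_subset ih fun p hp => hp.1.1.1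
  have hAm : ∀ k, MeasurableSet (A k) := fun k => by
    induction k with
    | zero => exact .empty
    | succ k ih =>
      rw [hA]
      exact ih.union ((hC k).diff (hproj {r | r.2 ∈ A k} (measurable_snd ih)))
  have hmono : Monotone A := monotone_nat_of_le_succ fun k => by
    rw [hA]
    exact subset_union_left
  have hind : ∀ k, ∀ p ∈ A k, ∀ q ∈ A k, (p, q) ∈ G → p = q := fun k => by
    induction k with
    | zero => exact fun p hp => hp.elim
    | succ k ih =>
      rw [hA]
      rintro p (hp | hp) q (hq | hq) hpq
      · exact ih p hp q hq hpq
      · exact (hq.2 ⟨p, hAS k hp, hq.1.1.1, hsymm _ _ hpq, hp⟩).elim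
      · exact (hp.2 ⟨q, hAS k hq, hp.1.1.1, hpq, hq⟩).elim
      · by_contra hne
        exact hp.1.2 ⟨q, hq.1.1.1, hp.1.1.1, hpq, hq.1.1.2, fun h => hne h.symm⟩
  refine ⟨⋃ k, A k, iUnion_subset hAS, .iUnion hAm, fun p hp q hq hpq => ?_, fun p hp => ?_⟩
  · obtain ⟨j, hj⟩ := mem_iUnion.1 hp
    obtain ⟨k, hk⟩ := mem_iUnion.1 hq
    exact hind (max j k) p (hmono (le_max_left _ _) hj) q (hmono (le_max_right _ _) hk) hpq
  · obtain ⟨k, hk⟩ := hcov p hp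
    rcases Classical.em (∃ q ∈ S, p ∈ S ∧ (p, q) ∈ G ∧ q ∈ A k) with h | h
    · obtain ⟨q, -, -, hpq, hq⟩ := h
      exact .inr ⟨q, mem_iUnion.2 ⟨k, hq⟩, hpq⟩
    · refine .inl (mem_iUnion.2 ⟨k + 1, ?_⟩)
      rw [hA]
      exact .inr ⟨hk, h⟩

section Augmenting

variable {X Y : Type*} (R : Set (X × Y)) (D : Set X) (g : X → Y)

/-- Augmenting walks of length `n`: like augmenting paths, but the `y i` need not be distinct. -/
def augWalks (n : ℕ) : Set ((Fin (n + 1) → X) × (Fin (n + 1) → Y)) :=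
  {p | p.1 0 ∉ D ∧ (∀ i, (p.1 i, p.2 i) ∈ R) ∧
    (∀ i : Fin n, p.1 i.succ ∈ D ∧ g (p.1 i.succ) = p.2 i.castSucc) ∧ p.2 (Fin.last n) ∉ g '' D}

/-- The points reached from the complement of `D` by alternating walks with `k` steps. -/
def altReach : ℕ → Set X
  | 0 => Dᶜ
  | k + 1 => {x | x ∈ D ∧ ∃ x' ∈ altReach k, (x', g x) ∈ R}

/-- There are no augmenting walks of length less than `n`. -/
def NoShortAugWalk (n : ℕ) : Prop :=
  ∀ j < n, ∀ x ∈ altReach R D g j, ∀ y, (x, y) ∈ R → y ∈ g '' D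

/-- Two pairs of finite sequences meet when they have a common entry. -/
def meetRel (X Y : Type*) (n : ℕ) :
    Set (((Fin (n + 1) → X) × (Fin (n + 1) → Y)) × ((Fin (n + 1) → X) × (Fin (n + 1) → Y))) :=
  {r | ∃ i j, r.1.1 i = r.2.1 j ∨ r.1.2 i = r.2.2 j}

variable {R D g}

theorem mem_altReach_of_mem_augWalks {n : ℕ} {p : (Fin (n + 1) → X) × (Fin (n + 1) → Y)}
    (hp : p ∈ augWalks R D g n) (i : Fin (n + 1)) : p.1 i ∈ altReach R D g i := by
  induction i using Fin.induction with
  | zero => exact hp.1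
  | succ i ih =>
    rw [Fin.val_succ]
    exact ⟨(hp.2.2.1 i).1, _, ih, by rw [(hp.2.2.1 i).2]; exact hp.2.1 _⟩

theorem NoShortAugWalk.not_isAugPath {n m : ℕ} (h : NoShortAugWalk R D g n) (hm : m < n)
    (x : Fin (m + 1) → X) (y : Fin (m + 1) → Y) : ¬ IsAugPath R D g m x y := by
  rintro ⟨h0, -, hR, hg, hy⟩
  exact hy (h m hm _ (mem_altReach_of_mem_augWalks (p := (x, y)) ⟨h0, hR, hg, hy⟩ (Fin.last m)) _
    (hR _))

theorem NoShortAugWalk.le_of_mem_altReach {n : ℕ} (h : NoShortAugWalk R D g n)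
    {p : (Fin (n + 1) → X) × (Fin (n + 1) → Y)} (hp : p ∈ augWalks R D g n) (i : Fin (n + 1)) :
    ∀ j, p.1 i ∈ altReach R D g j → (i : ℕ) ≤ j := by
  induction i using Fin.reverseInduction with
  | last =>
    intro j hj
    by_contra! hlt
    exact hp.2.2.2 (h j (by simpa using hlt) _ hj _ (hp.2.1 _))
  | cast i ih =>
    intro j hj
    have := ih (j + 1) ⟨(hp.2.2.1 i).1, _, hj, by rw [(hp.2.2.1 i).2]; exact hp.2.1 _⟩
    simp only [Fin.val_succ, Fin.val_castSucc] at this ⊢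
    omega

theorem NoShortAugWalk.fst_injective {n : ℕ} (h : NoShortAugWalk R D g n)
    {p : (Fin (n + 1) → X) × (Fin (n + 1) → Y)} (hp : p ∈ augWalks R D g n) :
    Function.Injective p.1 := fun i j hij =>
  Fin.ext (le_antisymm
    (h.le_of_mem_altReach hp i _ (hij ▸ mem_altReach_of_mem_augWalks hp j))
    (h.le_of_mem_altReach hp j _ (hij ▸ mem_altReach_of_mem_augWalks hp i)))

theorem NoShortAugWalk.snd_injective {n : ℕ} (h : NoShortAugWalk R D g n) (hinj : InjOn g D)
    {p : (Fin (n + 1) → X) × (Fin (n + 1) → Y)} (hp : p ∈ augWalks R D g n) :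
    Function.Injective p.2 := by
  intro i j hij
  have hmem : ∀ k : Fin n, p.2 k.castSucc ∈ g '' D := fun k =>
    ⟨_, (hp.2.2.1 k).1, (hp.2.2.1 k).2⟩
  rcases Fin.eq_castSucc_or_eq_last i with ⟨i, rfl⟩ | rfl <;>
    rcases Fin.eq_castSucc_or_eq_last j with ⟨j, rfl⟩ | rfl
  · rw [← (hp.2.2.1 i).2, ← (hp.2.2.1 j).2] at hij
    have := h.fst_injective hp (hinj (hp.2.2.1 i).1 (hp.2.2.1 j).1 hij)
    rw [Fin.succ_inj.1 this]
  · exact (hp.2.2.2 (hij ▸ hmem i)).elim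
  · exact (hp.2.2.2 (hij ▸ hmem j)).elim
  · rfl

theorem finite_setOf_mem_augWalks_fst_eq (hlocX : ∀ x : X, {y | (x, y) ∈ R}.Finite)
    (hlocY : ∀ y : Y, {x | (x, y) ∈ R}.Finite) (hcomp : ∀ x ∈ D, (x, g x) ∈ R) {n : ℕ}
    (j : Fin (n + 1)) (a : X) : {q | q ∈ augWalks R D g n ∧ q.1 j = a}.Finite := by
  set F := {q | q ∈ augWalks R D g n ∧ q.1 j = a} with hF
  have hN : ∀ x, {x' | ∃ y, (x, y) ∈ R ∧ (x', y) ∈ R}.Finite := fun x =>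
    ((hlocX x).biUnion fun y _ => hlocY y).subset fun x' ⟨y, h1, h2⟩ => mem_biUnion h1 h2
  have hR' : ∀ q ∈ F, ∀ i : Fin n, (q.1 i.succ, q.2 i.castSucc) ∈ R := fun q hq i => by
    rw [← (hq.1.2.2.1 i).2]
    exact hcomp _ (hq.1.2.2.1 i).1
  have hiff : ∀ i : Fin n, ((fun q => q.1 i.castSucc) '' F).Finite ↔
      ((fun q => q.1 i.succ) '' F).Finite := fun i => by
    constructor <;> intro h
    · refine (h.biUnion fun x _ => hN x).subset ?_
      rintro _ ⟨q, hq, rfl⟩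
      exact mem_biUnion (mem_image_of_mem _ hq) ⟨_, hq.1.2.1 _, hR' q hq i⟩
    · refine (h.biUnion fun x _ => hN x).subset ?_
      rintro _ ⟨q, hq, rfl⟩
      exact mem_biUnion (mem_image_of_mem _ hq) ⟨_, hR' q hq i, hq.1.2.1 _⟩
  have hiff0 : ∀ i : Fin (n + 1), ((fun q => q.1 0) '' F).Finite ↔
      ((fun q => q.1 i) '' F).Finite := fun i => by
    induction i using Fin.induction with
    | zero => rfl
    | succ i ih => exact ih.trans (hiff i)
  have hj : ((fun q => q.1 j) '' F).Finite := (finite_singleton a).subset <| by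
    rintro _ ⟨q, hq, rfl⟩
    exact hq.2
  have hX : ∀ i, ((fun q => q.1 i) '' F).Finite := fun i => (hiff0 i).1 ((hiff0 j).2 hj)
  have hY : ∀ i, (⋃ x ∈ (fun q => q.1 i) '' F, {y | (x, y) ∈ R}).Finite := fun i =>
    (hX i).biUnion fun x _ => hlocX x
  refine ((Finite.pi' hX).prod (Finite.pi' hY)).subset fun q hq => ⟨fun i => ?_, fun i => ?_⟩
  · exact mem_image_of_mem _ hq
  · exact mem_biUnion (mem_image_of_mem _ hq) (hq.1.2.1 i)

theorem finite_setOf_mem_augWalks_meetRel (hlocX : ∀ x : X, {y | (x, y) ∈ R}.Finite)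
    (hlocY : ∀ y : Y, {x | (x, y) ∈ R}.Finite) (hcomp : ∀ x ∈ D, (x, g x) ∈ R) {n : ℕ}
    (p : (Fin (n + 1) → X) × (Fin (n + 1) → Y)) :
    {q | q ∈ augWalks R D g n ∧ (p, q) ∈ meetRel X Y n}.Finite := by
  have hfin := fun (j : Fin (n + 1)) (a : X) =>
    finite_setOf_mem_augWalks_fst_eq hlocX hlocY hcomp j a
  refine (finite_iUnion fun i => finite_iUnion fun j => (hfin j (p.1 i)).union
    ((hlocY (p.2 i)).biUnion fun a _ => hfin j a)).subset ?_
  rintro q ⟨hq, i, j, h⟩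
  refine mem_iUnion.2 ⟨i, mem_iUnion.2 ⟨j, ?_⟩⟩
  rcases h with h | h
  · exact .inl ⟨hq, h.symm⟩
  · exact .inr (mem_biUnion (show (q.1 j, p.2 i) ∈ R from h.symm ▸ hq.2.1 j) ⟨hq, rfl⟩)

theorem measurableSet_augWalks [MeasurableSpace X] [StandardBorelSpace X] [MeasurableSpace Y]
    [StandardBorelSpace Y] (hR : MeasurableSet R) (hD : MeasurableSet D) (hg : Measurable g)
    (hinj : InjOn g D) (n : ℕ) : MeasurableSet (augWalks R D g n) := by
  have hx : ∀ i : Fin (n + 1), Measurable fun p : (Fin (n + 1) → X) × (Fin (n + 1) → Y) => p.1 i :=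
    fun i => (measurable_pi_apply i).comp measurable_fst
  have hy : ∀ i : Fin (n + 1), Measurable fun p : (Fin (n + 1) → X) × (Fin (n + 1) → Y) => p.2 i :=
    fun i => (measurable_pi_apply i).comp measurable_snd
  refine (hx 0 hD).compl.inter (.inter ?_ (.inter ?_
    (hy (Fin.last n) (hD.image_of_measurable_injOn hg hinj)).compl))
  · change MeasurableSet {p : (Fin (n + 1) → X) × (Fin (n + 1) → Y) | ∀ i, (p.1 i, p.2 i) ∈ R}
    simp only [ofPred_forall]
    exact .iInter fun i => ((hx i).prodMk (hy i)) hR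
  · change MeasurableSet {p : (Fin (n + 1) → X) × (Fin (n + 1) → Y) |
      ∀ i : Fin n, p.1 i.succ ∈ D ∧ g (p.1 i.succ) = p.2 i.castSucc}
    simp only [ofPred_forall]
    exact .iInter fun i => (hx i.succ hD).inter
      (measurableSet_eq_fun (hg.comp (hx i.succ)) (hy i.castSucc))

theorem measurableSet_meetRel [MeasurableSpace X] [StandardBorelSpace X] [MeasurableSpace Y]
    [StandardBorelSpace Y] (n : ℕ) : MeasurableSet (meetRel X Y n) := by
  simp only [meetRel, ofPred_exists]
  refine .iUnion fun i => .iUnion fun j => .union (measurableSet_eq_fun ?_ ?_)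
    (measurableSet_eq_fun ?_ ?_) <;> fun_prop

/-- Augmenting along a maximal family of disjoint augmenting walks of minimal length `n` leaves
no augmenting walks of length at most `n`. -/
theorem NoShortAugWalk.augment {n : ℕ} (h : NoShortAugWalk R D g n) (hinj : InjOn g D)
    {T : Set ((Fin (n + 1) → X) × (Fin (n + 1) → Y))} (hTS : T ⊆ augWalks R D g n)
    (hmax : ∀ p ∈ augWalks R D g n, p ∈ T ∨ ∃ q ∈ T, (p, q) ∈ meetRel X Y n)
    {D' : Set X} {g' : X → Y} (hDD' : D ⊆ D') (hTD' : ∀ p ∈ T, ∀ i, p.1 i ∈ D')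
    (hD'T : ∀ x ∈ D', x ∈ D ∨ ∃ p ∈ T, ∃ i, p.1 i = x)
    (hT : ∀ p ∈ T, ∀ i, g' (p.1 i) = p.2 i)
    (hoff : ∀ x, (¬ ∃ p ∈ T, ∃ i, p.1 i = x) → g' x = g x)
    (him : g '' D ⊆ g' '' D') : NoShortAugWalk R D' g' (n + 1) := by
  have hon : ∀ k < n, ∀ p ∈ T, ∀ i, (∃ x' ∈ altReach R D g k, (x', p.2 i) ∈ R) → (i : ℕ) ≤ k := by
    rintro k hk p hp i ⟨x', hx', hR⟩
    rcases Fin.eq_castSucc_or_eq_last i with ⟨i, rfl⟩ | rfl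
    · have := h.le_of_mem_altReach (hTS hp) i.succ (k + 1)
        ⟨((hTS hp).2.2.1 i).1, x', hx', by rwa [((hTS hp).2.2.1 i).2]⟩
      simpa using this
    · exact ((hTS hp).2.2.2 (h k hk x' hx' _ hR)).elim
  have hlevel : ∀ k ≤ n, ∀ x ∈ altReach R D' g' k, (∃ j ≤ k, x ∈ altReach R D g j) ∧
      ((∃ p ∈ T, ∃ i, p.1 i = x) → ∃ j < k, x ∈ altReach R D g j) := by
    intro k
    induction k with
    | zero =>
      intro _ x hx
      refine ⟨⟨0, le_rfl, fun hxD => hx (hDD' hxD)⟩, ?_⟩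
      rintro ⟨p, hp, i, rfl⟩
      exact (hx (hTD' p hp i)).elim
    | succ k ih =>
      rintro hk x ⟨hxD', x', hx', hR⟩
      obtain ⟨⟨j, hjk, hj⟩, -⟩ := ih (by omega) x' hx'
      by_cases hx : ∃ p ∈ T, ∃ i, p.1 i = x
      · obtain ⟨p, hp, i, rfl⟩ := hx
        rw [hT p hp i] at hR
        have hi := hon j (by omega) p hp i ⟨x', hj, hR⟩
        have hm := mem_altReach_of_mem_augWalks (hTS hp) i
        exact ⟨⟨i, by omega, hm⟩, fun _ => ⟨i, by omega, hm⟩⟩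
      · rw [hoff x hx] at hR
        exact ⟨⟨j + 1, by omega, (hD'T x hxD').resolve_right hx, x', hj, hR⟩,
          fun hx' => (hx hx').elim⟩
  have hwalk : ∀ k ≤ n, ∀ x ∈ altReach R D' g' k, (∀ j < k, x ∉ altReach R D g j) →
      ∃ s : ℕ → X, s 0 ∉ D ∧ (∀ i < k, s (i + 1) ∈ D ∧ (s i, g (s (i + 1))) ∈ R) ∧ s k = x ∧
        ∀ i ≤ k, ¬ ∃ p ∈ T, ∃ l, p.1 l = s i := by
    intro k
    induction k with
    | zero =>
      intro _ x hx _
      refine ⟨fun _ => x, fun hxD => hx (hDD' hxD), fun i hi => by omega, rfl, ?_⟩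
      rintro i - ⟨p, hp, l, rfl⟩
      exact hx (hTD' p hp l)
    | succ k ih =>
      intro hk x hx hlt
      have hxT : ¬ ∃ p ∈ T, ∃ l, p.1 l = x := fun hxT =>
        let ⟨j, hj, hxj⟩ := (hlevel (k + 1) hk x hx).2 hxT
        hlt j hj hxj
      obtain ⟨hxD', x', hx', hR⟩ := hx
      have hxD := (hD'T x hxD').resolve_right hxT
      rw [hoff x hxT] at hR
      obtain ⟨s, hs0, hs, rfl, hsT⟩ := ih (by omega) x' hx' fun j hj hxj =>
        hlt (j + 1) (by omega) ⟨hxD, x', hxj, hR⟩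
      refine ⟨fun i => if i ≤ k then s i else x, by simpa using hs0, fun i hi => ?_, by simp,
        fun i hi => ?_⟩
      · rcases Nat.lt_succ_iff_lt_or_eq.1 hi with hik | rfl
        · simpa [hik.le, Nat.succ_le_iff.2 hik] using hs i hik
        · simpa using ⟨hxD, hR⟩
      · dsimp only
        split_ifs with hik
        · exact hsT i hik
        · exact hxT
  intro k hk x hx y hxy
  by_contra hy
  have hyD : y ∉ g '' D := fun hyD => hy (him hyD)
  obtain ⟨j, hjk, hj⟩ := (hlevel k (by omega) x hx).1
  have hlow : ∀ j < n, x ∉ altReach R D g j := fun j hjn hj => hyD (h j hjn x hj y hxy)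
  obtain rfl : k = n := by
    by_contra hkn
    exact hlow j (by omega) hj
  obtain ⟨s, hs0, hs, rfl, hsT⟩ := hwalk k le_rfl x hx hlow
  let p : (Fin (k + 1) → X) × (Fin (k + 1) → Y) :=
    (fun i => s i, fun i => if (i : ℕ) < k then g (s (i + 1)) else y)
  have hp : p ∈ augWalks R D g k := by
    refine ⟨hs0, fun i => ?_, fun i => ?_, ?_⟩
    · by_cases hi : (i : ℕ) < k
      · simpa [p, hi] using (hs i hi).2
      · have hik : (i : ℕ) = k := by omega
        simpa [p, hik] using hxy
    · simpa [p] using (hs i i.2).1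
    · simpa [p] using hyD
  have hpT : ∀ q ∈ T, ∀ i j, q.1 j ≠ p.1 i := fun q hq i j hij =>
    hsT i (by omega) ⟨q, hq, j, hij⟩
  rcases hmax p hp with hpT' | ⟨q, hq, i, j, hij | hij⟩
  · exact hpT p hpT' 0 0 rfl
  · exact hpT q hq i j hij.symm
  · rcases Fin.eq_castSucc_or_eq_last i with ⟨i, rfl⟩ | rfl
    · rw [← (hp.2.2.1 i).2] at hij
      rcases Fin.eq_castSucc_or_eq_last j with ⟨j, rfl⟩ | rfl
      · rw [← ((hTS hq).2.2.1 j).2] at hij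
        exact hpT q hq _ _ (hinj (hp.2.2.1 i).1 ((hTS hq).2.2.1 j).1 hij).symm
      · exact (hTS hq).2.2.2 ⟨_, (hp.2.2.1 i).1, hij⟩
    · refine hy ⟨q.1 j, hTD' q hq j, ?_⟩
      rw [hT q hq j, ← hij]
      simp [p]

end Augmenting

/-- One phase of the Hopcroft–Karp procedure, in the Borel setting. -/
theorem exists_measurable_noShortAugWalk_succ {X Y : Type*} [MeasurableSpace X]
    [StandardBorelSpace X] [MeasurableSpace Y] [StandardBorelSpace Y]
    {μ : Measure X} {ν : Measure Y} {R : Set (X × Y)} (hR : MeasurableSet R)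
    (hlocX : ∀ x : X, {y | (x, y) ∈ R}.Finite) (hlocY : ∀ y : Y, {x | (x, y) ∈ R}.Finite)
    (hpres : MeasurePreservingRel R μ ν) {D : Set X} {g : X → Y} (hD : MeasurableSet D)
    (hg : Measurable g) (hinj : InjOn g D) (hcomp : ∀ x ∈ D, (x, g x) ∈ R) {n : ℕ}
    (h : NoShortAugWalk R D g n) :
    ∃ (D' E : Set X) (g' : X → Y), MeasurableSet D' ∧ Measurable g' ∧ InjOn g' D' ∧
      (∀ x ∈ D', (x, g' x) ∈ R) ∧ D ⊆ D' ∧ NoShortAugWalk R D' g' (n + 1) ∧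
      (∀ x ∈ D', x ∉ E → x ∈ D ∧ g' x = g x) ∧ μ E ≤ (n + 1 : ℕ) * μ (D' \ D) := by
  obtain ⟨T, hTS, hTm, hTind, hTmax⟩ := exists_measurableSet_maximal_independent
    (measurableSet_augWalks hR hD hg hinj n) (measurableSet_meetRel n)
    (fun p q ⟨i, j, hij⟩ => ⟨j, i, hij.imp Eq.symm Eq.symm⟩)
    (fun p _ => finite_setOf_mem_augWalks_meetRel hlocX hlocY hcomp p)
  have hxinj : ∀ p ∈ T, ∀ q ∈ T, ∀ i j, p.1 i = q.1 j → p = q ∧ i = j := by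
    intro p hp q hq i j hij
    obtain rfl := hTind p hp q hq ⟨i, j, .inl hij⟩
    exact ⟨rfl, h.fst_injective (hTS hp) hij⟩
  have hyinj : ∀ p ∈ T, ∀ q ∈ T, ∀ i j, p.2 i = q.2 j → p = q ∧ i = j := by
    intro p hp q hq i j hij
    obtain rfl := hTind p hp q hq ⟨i, j, .inr hij⟩
    exact ⟨rfl, h.snd_injective hinj (hTS hp) hij⟩
  have hmx : ∀ i : Fin (n + 1), Measurable fun p : (Fin (n + 1) → X) × (Fin (n + 1) → Y) => p.1 i :=
    fun i => (measurable_pi_apply i).comp measurable_fst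
  have hmy : ∀ i : Fin (n + 1), Measurable fun p : (Fin (n + 1) → X) × (Fin (n + 1) → Y) => p.2 i :=
    fun i => (measurable_pi_apply i).comp measurable_snd
  have hTX : ∀ i, InjOn (fun p : (Fin (n + 1) → X) × (Fin (n + 1) → Y) => p.1 i) T :=
    fun i p hp q hq hpq => (hxinj p hp q hq i i hpq).1
  let V : Fin (n + 1) → Set X := fun i => (fun p => p.1 i) '' T
  have hV : ∀ i, MeasurableSet (V i) := fun i => hTm.image_of_measurable_injOn (hmx i) (hTX i)
  have hmemV : ∀ x, x ∈ ⋃ i, V i ↔ ∃ p ∈ T, ∃ i, p.1 i = x := by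
    intro x
    simp only [V, mem_iUnion, mem_image]
    exact ⟨fun ⟨i, p, hp, hx⟩ => ⟨p, hp, i, hx⟩, fun ⟨p, hp, i, hx⟩ => ⟨i, p, hp, hx⟩⟩
  obtain ⟨g', hT, hoff⟩ : ∃ g' : X → Y, (∀ p ∈ T, ∀ i, g' (p.1 i) = p.2 i) ∧
      ∀ x, (¬ ∃ p ∈ T, ∃ i, p.1 i = x) → g' x = g x := by
    let a : T × Fin (n + 1) → X := fun r => r.1.1.1 r.2
    have ha : Function.Injective a := fun r r' hr => by
      have := hxinj _ r.1.2 _ r'.1.2 _ _ hr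
      exact Prod.ext (Subtype.ext this.1) this.2
    refine ⟨Function.extend a (fun r => r.1.1.2 r.2) g, fun p hp i => ?_, fun x hx => ?_⟩
    · exact ha.extend_apply _ _ (⟨p, hp⟩, i)
    · refine Function.extend_apply' _ _ _ ?_
      rintro ⟨r, rfl⟩
      exact hx ⟨r.1.1, r.1.2, r.2, rfl⟩
  have hg' : Measurable g' := by
    intro B hB
    have hpre : g' ⁻¹' B =
        (⋃ i, (fun p => p.1 i) '' (T ∩ (fun p => p.2 i) ⁻¹' B)) ∪ (g ⁻¹' B \ ⋃ i, V i) := by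
      ext x
      rw [mem_union, mem_sdiff, hmemV]
      by_cases hx : ∃ p ∈ T, ∃ i, p.1 i = x
      · refine ⟨fun hxB => .inl ?_, ?_⟩
        · obtain ⟨p, hp, i, rfl⟩ := hx
          rw [mem_preimage, hT p hp i] at hxB
          exact mem_iUnion.2 ⟨i, p, ⟨hp, hxB⟩, rfl⟩
        · rintro (hx' | hx')
          · obtain ⟨i, p, ⟨hp, hpB⟩, rfl⟩ := mem_iUnion.1 hx'
            rw [mem_preimage, hT p hp i]
            exact hpB
          · exact (hx'.2 hx).elim
      · rw [mem_preimage, hoff x hx]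
        refine ⟨fun hxB => .inr ⟨hxB, hx⟩, ?_⟩
        rintro (hx' | hx')
        · obtain ⟨i, p, ⟨hp, -⟩, rfl⟩ := mem_iUnion.1 hx'
          exact (hx ⟨p, hp, i, rfl⟩).elim
        · exact hx'.1
    rw [hpre]
    exact (MeasurableSet.iUnion fun i => (hTm.inter (hmy i hB)).image_of_measurable_injOn (hmx i)
      ((hTX i).mono inter_subset_left)).union ((hg hB).diff (.iUnion hV))
  have hV0 : ∀ p ∈ T, ∀ i, p.1 i ∈ D ∪ V 0 := fun p hp i => by
    cases i using Fin.cases with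
    | zero => exact .inr ⟨p, hp, rfl⟩
    | succ i => exact .inl ((hTS hp).2.2.1 i).1
  have hD'T : ∀ x ∈ D ∪ V 0, x ∈ D ∨ ∃ p ∈ T, ∃ i, p.1 i = x := by
    rintro x (hx | ⟨p, hp, rfl⟩)
    · exact .inl hx
    · exact .inr ⟨p, hp, 0, rfl⟩
  have hcross : ∀ p ∈ T, ∀ i, ∀ x ∈ D, (¬ ∃ p ∈ T, ∃ i, p.1 i = x) → p.2 i ≠ g x := by
    intro p hp i x hxD hx hpx
    rcases Fin.eq_castSucc_or_eq_last i with ⟨i, rfl⟩ | rfl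
    · rw [← ((hTS hp).2.2.1 i).2] at hpx
      exact hx ⟨p, hp, _, hinj ((hTS hp).2.2.1 i).1 hxD hpx⟩
    · exact (hTS hp).2.2.2 ⟨x, hxD, hpx.symm⟩
  have hinj' : InjOn g' (D ∪ V 0) := by
    intro x hx x' hx' hxx'
    by_cases h1 : ∃ p ∈ T, ∃ i, p.1 i = x <;> by_cases h2 : ∃ p ∈ T, ∃ i, p.1 i = x'
    · obtain ⟨p, hp, i, rfl⟩ := h1
      obtain ⟨q, hq, j, rfl⟩ := h2
      rw [hT p hp, hT q hq] at hxx'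
      obtain ⟨rfl, rfl⟩ := hyinj p hp q hq i j hxx'
      rfl
    · obtain ⟨p, hp, i, rfl⟩ := h1
      rw [hT p hp, hoff x' h2] at hxx'
      exact (hcross p hp i x' ((hD'T x' hx').resolve_right h2) h2 hxx').elim
    · obtain ⟨q, hq, j, rfl⟩ := h2
      rw [hT q hq, hoff x h1] at hxx'
      exact (hcross q hq j x ((hD'T x hx).resolve_right h1) h1 hxx'.symm).elim
    · rw [hoff x h1, hoff x' h2] at hxx'
      exact hinj ((hD'T x hx).resolve_right h1) ((hD'T x' hx').resolve_right h2) hxx'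
  have hcomp' : ∀ x ∈ D ∪ V 0, (x, g' x) ∈ R := by
    intro x hx
    by_cases h1 : ∃ p ∈ T, ∃ i, p.1 i = x
    · obtain ⟨p, hp, i, rfl⟩ := h1
      rw [hT p hp]
      exact (hTS hp).2.1 i
    · rw [hoff x h1]
      exact hcomp x ((hD'T x hx).resolve_right h1)
  have him : g '' D ⊆ g' '' (D ∪ V 0) := by
    rintro _ ⟨x, hx, rfl⟩
    by_cases h1 : ∃ p ∈ T, ∃ i, p.1 i = x
    · obtain ⟨p, hp, i, rfl⟩ := h1
      cases i using Fin.cases with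
      | zero => exact ((hTS hp).1 hx).elim
      | succ i => exact ⟨_, hV0 p hp i.castSucc, by rw [hT p hp, ((hTS hp).2.2.1 i).2]⟩
    · exact ⟨x, .inl hx, hoff x h1⟩
  have hVD' : ∀ i, V i ⊆ D ∪ V 0 := by
    rintro i _ ⟨p, hp, rfl⟩
    exact hV0 p hp i
  have hμV : ∀ i, μ (V i) = μ (V 0) := by
    intro i
    induction i using Fin.induction with
    | zero => rfl
    | succ i ih =>
      have hsub : V i.succ ⊆ D := by
        rintro _ ⟨p, hp, rfl⟩
        exact ((hTS hp).2.2.1 i).1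
      rw [← ih, hpres (V i.castSucc) g' (hV _) hg' (hinj'.mono (hVD' _)) fun x hx => hcomp' x (hVD' _ hx),
        hpres (V i.succ) g (hV _) hg (hinj.mono hsub) fun x hx => hcomp x (hsub hx)]
      congr 1
      simp only [V, image_image]
      exact image_congr fun p hp => by rw [hT p hp, ((hTS hp).2.2.1 i).2]
  refine ⟨D ∪ V 0, ⋃ i, V i, g', hD.union (hV 0), hg', hinj', hcomp', subset_union_left,
    h.augment hinj hTS hTmax subset_union_left hV0 hD'T hT hoff him, fun x hx hxE => ?_, ?_⟩
  · rw [hmemV] at hxE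
    exact ⟨(hD'T x hx).resolve_right hxE, hoff x hxE⟩
  · have hdiff : (D ∪ V 0) \ D = V 0 := by
      rw [union_sdiff_left, sdiff_eq_left]
      refine disjoint_left.2 ?_
      rintro _ ⟨p, hp, rfl⟩
      exact (hTS hp).1
    rw [hdiff]
    refine (measure_iUnion_fintype_le μ V).trans ?_
    simp [hμV]

/-- After `n` phases there are no augmenting walks of length less than `n`. -/
theorem exists_measurable_noShortAugWalk {X Y : Type*} [MeasurableSpace X]
    [StandardBorelSpace X] [MeasurableSpace Y] [StandardBorelSpace Y]
    {μ : Measure X} {ν : Measure Y} {R : Set (X × Y)} (hR : MeasurableSet R)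
    (hlocX : ∀ x : X, {y | (x, y) ∈ R}.Finite) (hlocY : ∀ y : Y, {x | (x, y) ∈ R}.Finite)
    (hpres : MeasurePreservingRel R μ ν) {D : Set X} {g : X → Y} (hD : MeasurableSet D)
    (hg : Measurable g) (hinj : InjOn g D) (hcomp : ∀ x ∈ D, (x, g x) ∈ R) (n : ℕ) :
    ∃ (D' E : Set X) (g' : X → Y), MeasurableSet D' ∧ Measurable g' ∧ InjOn g' D' ∧
      (∀ x ∈ D', (x, g' x) ∈ R) ∧ D ⊆ D' ∧ NoShortAugWalk R D' g' n ∧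
      (∀ x ∈ D', x ∉ E → x ∈ D ∧ g' x = g x) ∧ μ E ≤ n * μ (D' \ D) := by
  induction n with
  | zero =>
    exact ⟨D, ∅, g, hD, hg, hinj, hcomp, subset_rfl, fun j hj => (Nat.not_lt_zero j hj).elim,
      fun x hx _ => ⟨hx, rfl⟩, by simp⟩
  | succ n ih =>
    obtain ⟨D₁, E₁, g₁, hD₁, hg₁, hinj₁, hcomp₁, hsub₁, h₁, hE₁, hμ₁⟩ := ih
    obtain ⟨D₂, E₂, g₂, hD₂, hg₂, hinj₂, hcomp₂, hsub₂, h₂, hE₂, hμ₂⟩ :=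
      exists_measurable_noShortAugWalk_succ hR hlocX hlocY hpres hD₁ hg₁ hinj₁ hcomp₁ h₁
    refine ⟨D₂, E₁ ∪ E₂, g₂, hD₂, hg₂, hinj₂, hcomp₂, hsub₁.trans hsub₂, h₂, fun x hx hxE => ?_, ?_⟩
    · obtain ⟨hx₁, hgx₂⟩ := hE₂ x hx fun hx' => hxE (.inr hx')
      obtain ⟨hx₀, hgx₁⟩ := hE₁ x hx₁ fun hx' => hxE (.inl hx')
      exact ⟨hx₀, hgx₂.trans hgx₁⟩
    · have hunion : D₂ \ D = (D₁ \ D) ∪ (D₂ \ D₁) := by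
        rw [union_comm, sdiff_union_sdiff_cancel hsub₂ hsub₁]
      have hdisj : Disjoint (D₁ \ D) (D₂ \ D₁) :=
        disjoint_left.2 fun x hx hx' => hx'.2 hx.1
      rw [hunion, measure_union hdisj (hD₂.diff hD₁), mul_add]
      refine (measure_union_le _ _).trans (add_le_add (hμ₁.trans ?_) hμ₂)
      gcongr
      exact n.le_succ

/-- **Elek–Lippner augmenting-path improvement.** Given a Borel partial injection `g` (with
Borel domain `D`) compatible with `R` and `n ≥ 1`, there is a Borel partial injection `g'`
(with Borel domain `D' ⊇ D`) compatible with `R`, admitting no augmenting paths of length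
less than `n`, and differing from `g` on a set of measure at most `n·μ(X ∖ D)`. -/
theorem stmt4 {X Y : Type*} [MeasurableSpace X] [StandardBorelSpace X]
    [MeasurableSpace Y] [StandardBorelSpace Y]
    (μ : Measure X) [IsProbabilityMeasure μ] (ν : Measure Y)
    (R : Set (X × Y)) (hR : MeasurableSet R)
    (hlocX : ∀ x : X, {y | (x, y) ∈ R}.Finite)
    (hlocY : ∀ y : Y, {x | (x, y) ∈ R}.Finite)
    (hpres : MeasurePreservingRel R μ ν)
    (D : Set X) (g : X → Y) (hD : MeasurableSet D) (hg : Measurable g)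
    (hinj : Set.InjOn g D) (hcomp : ∀ x ∈ D, (x, g x) ∈ R)
    (n : ℕ) (hn : 1 ≤ n) :
    ∃ (D' : Set X) (g' : X → Y), MeasurableSet D' ∧ Measurable g' ∧
      Set.InjOn g' D' ∧ (∀ x ∈ D', (x, g' x) ∈ R) ∧ D ⊆ D' ∧
      (∀ m, m < n → ∀ (x : Fin (m + 1) → X) (y : Fin (m + 1) → Y),
        ¬ IsAugPath R D' g' m x y) ∧
      μ {x | x ∈ D' ∧ (x ∉ D ∨ g' x ≠ g x)} ≤ n * μ Dᶜ := by
  obtain ⟨D', E, g', hD', hg', hinj', hcomp', hsub, h, hE, hμ⟩ :=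
    exists_measurable_noShortAugWalk hR hlocX hlocY hpres hD hg hinj hcomp n
  refine ⟨D', g', hD', hg', hinj', hcomp', hsub, fun m hm => h.not_isAugPath hm, ?_⟩
  calc μ {x | x ∈ D' ∧ (x ∉ D ∨ g' x ≠ g x)} ≤ μ E := by
        refine measure_mono fun x hx => ?_
        by_contra hxE
        obtain ⟨hxD, hgx⟩ := hE x hx.1 hxE
        exact hx.2.elim (fun h => h hxD) fun h => h hgx
    _ ≤ n * μ (D' \ D) := hμ
    _ ≤ n * μ Dᶜ := by
        gcongr
        exact fun x hx => hx.2
end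

section
/- Suppose X and Y are standard Borel spaces, μ is a Borel measure on X, and ν is a Borel measure on Y. Suppose R ⊆ X × Y is a Borel, locally finite, (μ,ν)-preserving set. Assume there exist numbers a, b > 0 such that |R_x| ≥ a for μ-almost every x ∈ X and |R^y| ≤ b for ν-almost every y ∈ Y. Then ν(R_A) ≥ (a/b)·μ(A) for all Borel subsets A ⊆ X. -/
open MeasureTheory Set
open scoped ENNReal

/-- A sequence of sets is *measurably separated* if it can be enlarged to a sequence of measurable
sets with empty intersection. -/
def MeasurablySeparated {X : Type*} [MeasurableSpace X] (A : ℕ → Set X) : Prop :=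
  ∃ C : ℕ → Set X, (∀ n, MeasurableSet (C n)) ∧ (∀ n, A n ⊆ C n) ∧ ⋂ n, C n = ∅

namespace MeasurablySeparated

variable {X : Type*} [MeasurableSpace X] {A : ℕ → Set X}

/-- If one member of a sequence is split into countably many pieces and each piece yields a
measurably separated sequence, then the original sequence is measurably separated. -/
lemma of_split (i : ℕ) {B : ℕ → ℕ → Set X} (hAi : A i ⊆ ⋃ j, B j i)
    (hA : ∀ j n, n ≠ i → A n ⊆ B j n) (hB : ∀ j, MeasurablySeparated (B j)) :
    MeasurablySeparated A := by
  classical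
  choose C hCm hBC hC using hB
  refine ⟨fun n => if n = i then ⋃ j, C j i else ⋂ j, C j n, fun n => ?_, fun n => ?_, ?_⟩
  · dsimp only
    split_ifs
    · exact .iUnion fun j => hCm j i
    · exact .iInter fun j => hCm j n
  · dsimp only
    split_ifs with h
    · subst h
      exact hAi.trans (iUnion_mono fun j => hBC j n)
    · exact subset_iInter fun j => (hA j n h).trans (hBC j n)
  · refine eq_empty_of_forall_notMem fun x hx => ?_
    rw [mem_iInter] at hx
    have hi := hx i
    rw [if_pos rfl, mem_iUnion] at hi
    obtain ⟨j, hj⟩ := hi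
    have hxC : x ∈ ⋂ n, C j n := by
      refine mem_iInter.2 fun n => ?_
      by_cases h : n = i
      · exact h ▸ hj
      · have hn := hx n
        rw [if_neg h, mem_iInter] at hn
        exact hn j
    rw [hC j] at hxC
    exact hxC

lemma of_disjoint {m n : ℕ} (hmn : m ≠ n) {U V : Set X} (hU : MeasurableSet U)
    (hV : MeasurableSet V) (hUV : Disjoint U V) (hAU : A m ⊆ U) (hAV : A n ⊆ V) :
    MeasurablySeparated A := by
  classical
  refine ⟨fun k => if k = m then U else if k = n then V else univ, fun k => ?_, fun k => ?_, ?_⟩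
  · dsimp only
    split_ifs <;> simp [hU, hV]
  · dsimp only
    split_ifs with h h'
    · exact h ▸ hAU
    · exact h' ▸ hAV
    · exact subset_univ _
  · refine eq_empty_of_forall_notMem fun x hx => ?_
    rw [mem_iInter] at hx
    have h1 := hx m
    have h2 := hx n
    rw [if_pos rfl] at h1
    rw [if_neg hmn.symm, if_pos rfl] at h2
    exact disjoint_left.1 hUV h1 h2

lemma range_of_iInter_eq_empty [TopologicalSpace X] [T2Space X] [OpensMeasurableSpace X]
    {f : ℕ → (ℕ → ℕ) → X} (hf : ∀ n, Continuous (f n)) (h : ⋂ n, range (f n) = ∅) :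
    MeasurablySeparated fun n => range (f n) := by
  classical
  by_contra hsep
  let K : (ℕ → ℕ) → ℕ → ℕ → Set X := fun z t n =>
    f n '' {α | ∀ l, Nat.pair n l < t → α l = z (Nat.pair n l)}
  have step : ∀ z t, ¬ MeasurablySeparated (K z t) →
      ∃ j, ¬ MeasurablySeparated (K (Function.update z t j) (t + 1)) := by
    intro z t hz
    by_contra! hall
    refine hz (of_split t.unpair.1 ?_ ?_ hall)
    · rintro _ ⟨α, hα, rfl⟩
      refine mem_iUnion.2 ⟨α t.unpair.2, α, fun l hl => ?_, rfl⟩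
      rcases (Nat.lt_succ_iff_lt_or_eq.1 hl) with hl | hl
      · rw [Function.update_of_ne hl.ne]
        exact hα l hl
      · rw [hl, Function.update_self, ← hl, Nat.unpair_pair]
    · rintro j n hn _ ⟨α, hα, rfl⟩
      refine ⟨α, fun l hl => ?_, rfl⟩
      have hne : Nat.pair n l ≠ t := by
        rintro rfl
        simp at hn
      rw [Function.update_of_ne hne]
      exact hα l (by omega)
  choose j hj using step
  let Z : ∀ t, {z : ℕ → ℕ // ¬ MeasurablySeparated (K z t)} := fun t =>
    Nat.rec ⟨0, by simpa [K] using hsep⟩ (fun t z => ⟨_, hj z.1 t z.2⟩) t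
  have hZ : ∀ t, (Z (t + 1)).1 = Function.update (Z t).1 t (j (Z t).1 t (Z t).2) := fun _ => rfl
  let w : ℕ → ℕ := fun t => (Z (t + 1)).1 t
  have hw : ∀ t s, s < t → (Z t).1 s = w s := by
    intro t
    induction t with
    | zero => simp
    | succ t ih =>
      intro s hs
      rcases (Nat.lt_succ_iff_lt_or_eq.1 hs) with hs | rfl
      · rw [hZ, Function.update_of_ne hs.ne, ih s hs]
      · rfl
  have hK : ∀ t, ¬ MeasurablySeparated (K w t) := by
    intro t
    have : K w t = K (Z t).1 t := by
      funext n
      have : ∀ α : ℕ → ℕ, (∀ l, Nat.pair n l < t → α l = w (Nat.pair n l)) ↔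
          ∀ l, Nat.pair n l < t → α l = (Z t).1 (Nat.pair n l) := fun α =>
        forall_congr' fun l => forall_congr' fun hl => by rw [hw t _ hl]
      simp only [K, this]
    rw [this]
    exact (Z t).2
  have nbhd : ∀ n U, IsOpen U → f n (fun l => w (Nat.pair n l)) ∈ U →
      ∃ t₀, ∀ t, t₀ ≤ t → K w t n ⊆ U := by
    intro n U hU hx
    obtain ⟨I, u, hu, hI⟩ := isOpen_pi_iff.1 (hU.preimage (hf n)) _ hx
    refine ⟨I.sup (fun l => Nat.pair n l + 1), ?_⟩
    rintro t ht _ ⟨α, hα, rfl⟩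
    refine hI fun l hl => ?_
    rw [hα l ((Nat.lt_succ_self _).trans_le
      ((Finset.le_sup (f := fun l => Nat.pair n l + 1) hl).trans ht))]
    exact (hu l hl).2
  by_cases hne : ∃ n, f n (fun l => w (Nat.pair n l)) ≠ f 0 (fun l => w (Nat.pair 0 l))
  · obtain ⟨n, hn⟩ := hne
    obtain ⟨U, V, hU, hV, hxU, hxV, hUV⟩ := t2_separation hn
    obtain ⟨t₁, ht₁⟩ := nbhd n U hU hxU
    obtain ⟨t₂, ht₂⟩ := nbhd 0 V hV hxV
    refine hK (max t₁ t₂) (of_disjoint (m := n) (n := 0) ?_ hU.measurableSet hV.measurableSet hUV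
      (ht₁ _ (le_max_left _ _)) (ht₂ _ (le_max_right _ _)))
    rintro rfl
    exact hn rfl
  · push Not at hne
    have : f 0 (fun l => w (Nat.pair 0 l)) ∈ ⋂ n, range (f n) :=
      mem_iInter.2 fun n => ⟨_, hne n⟩
    rw [h] at this
    exact this

/-- **Novikov's separation theorem**: a sequence of analytic sets with empty intersection is
measurably separated. -/
theorem of_analyticSet [TopologicalSpace X] [T2Space X] [OpensMeasurableSpace X]
    (hA : ∀ n, AnalyticSet (A n)) (h : ⋂ n, A n = ∅) : MeasurablySeparated A := by
  by_cases hne : ∃ n, A n = ∅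
  · obtain ⟨n, hn⟩ := hne
    exact of_disjoint (m := n) (n := n + 1) (by omega) .empty .univ (empty_disjoint _)
      hn.subset (subset_univ _)
  · push Not at hne
    have : ∀ n, ∃ f : (ℕ → ℕ) → X, Continuous f ∧ range f = A n := fun n => by
      have := hA n
      rw [AnalyticSet] at this
      exact this.resolve_left (hne n).ne_empty
    choose f hf hfA using this
    obtain rfl : (fun n => range (f n)) = A := funext hfA
    exact range_of_iInter_eq_empty hf h

end MeasurablySeparated

section FiniteSections

variable {X Y : Type*} [MeasurableSpace Y] [StandardBorelSpace Y]

/-- The pairs `(x, y)` where `y` is a `k`-tuple of elements of the section `R_x`, listed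
increasingly for a fixed Borel linear order of `Y`. -/
def sectionTuples (R : Set (X × Y)) (k : ℕ) : Set (X × (Fin k → Y)) :=
  {p | StrictMono (fun i => embeddingReal Y (p.2 i)) ∧ ∀ i, (p.1, p.2 i) ∈ R}

lemma mem_fst_image_sectionTuples {R : Set (X × Y)} {x : X} (hx : {y | (x, y) ∈ R}.Finite)
    (k : ℕ) : x ∈ Prod.fst '' sectionTuples R k ↔ k ≤ {y | (x, y) ∈ R}.ncard := by
  classical
  constructor
  · rintro ⟨⟨_, y⟩, ⟨hy, hyR⟩, rfl⟩
    have hinj : Function.Injective y := fun i j hij =>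
      hy.injective (congrArg (embeddingReal Y) hij)
    have := ncard_le_ncard (s := range y) (range_subset_iff.2 hyR) hx
    rwa [← Nat.card_coe_set_eq, Nat.card_range_of_injective hinj, Nat.card_fin] at this
  · intro hk
    have hcard : k ≤ (hx.toFinset.image (embeddingReal Y)).card := by
      rwa [Finset.card_image_of_injective _ (measurableEmbedding_embeddingReal Y).injective,
        ← ncard_eq_toFinset_card _ hx]
    have hmem := fun i => Finset.orderEmbOfCardLe_mem _ hcard i
    simp only [Finset.mem_image, Finite.mem_toFinset, mem_ofPred_eq] at hmem
    choose y hyR hy using hmem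
    refine ⟨(x, y), ⟨?_, hyR⟩, rfl⟩
    simp only [hy]
    exact (Finset.orderEmbOfCardLe _ hcard).strictMono

lemma injOn_fst_sectionTuples {R : Set (X × Y)} {k : ℕ} (hR : ∀ x, {y | (x, y) ∈ R}.Finite)
    (hk : ∀ x, {y | (x, y) ∈ R}.ncard ≤ k) : InjOn Prod.fst (sectionTuples R k) := by
  classical
  rintro ⟨x, y⟩ hy ⟨x', z⟩ hz h
  obtain rfl : x = x' := h
  have hcard : ((hR x).toFinset.image (embeddingReal Y)).card = k := by
    rw [Finset.card_image_of_injective _ (measurableEmbedding_embeddingReal Y).injective,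
      ← ncard_eq_toFinset_card _ (hR x)]
    exact le_antisymm (hk x) ((mem_fst_image_sectionTuples (hR x) k).1 ⟨_, hy, rfl⟩)
  have huniq : ∀ w : Fin k → Y, (x, w) ∈ sectionTuples R k →
      (fun i => embeddingReal Y (w i)) = Finset.orderEmbOfFin _ hcard := fun w hw =>
    Finset.orderEmbOfFin_unique hcard
      (fun i => Finset.mem_image_of_mem _ ((hR x).mem_toFinset.2 (hw.2 i))) hw.1
  refine Prod.ext rfl (funext fun i => (measurableEmbedding_embeddingReal Y).injective ?_)
  exact congrFun ((huniq y hy).trans (huniq z hz).symm) i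

variable [MeasurableSpace X]

lemma measurableSet_sectionTuples {R : Set (X × Y)} (hR : MeasurableSet R) (k : ℕ) :
    MeasurableSet (sectionTuples R k) := by
  have he : Measurable (embeddingReal Y) := (measurableEmbedding_embeddingReal Y).measurable
  have hi : ∀ i : Fin k, Measurable fun p : X × (Fin k → Y) => p.2 i := fun i => by fun_prop
  have : sectionTuples R k =
      (⋂ i : Fin k, ⋂ j : Fin k, ⋂ _ : i < j,
        {p | embeddingReal Y (p.2 i) < embeddingReal Y (p.2 j)}) ∩
      ⋂ i : Fin k, (fun p : X × (Fin k → Y) => (p.1, p.2 i)) ⁻¹' R := by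
    ext p
    simp [sectionTuples, StrictMono]
  rw [this]
  refine .inter (.iInter fun i => .iInter fun j => .iInter fun _ =>
    measurableSet_lt (he.comp (hi i)) (he.comp (hi j))) (.iInter fun i => ?_)
  exact (measurable_fst.prodMk (hi i)) hR

variable [StandardBorelSpace X]

lemma measurableSet_fst_image_of_ncard_le {R : Set (X × Y)} (hR : MeasurableSet R)
    (hfin : ∀ x, {y | (x, y) ∈ R}.Finite) {k : ℕ} (hk : ∀ x, {y | (x, y) ∈ R}.ncard ≤ k) :
    MeasurableSet (Prod.fst '' R) := by
  induction k generalizing R with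
  | zero =>
    have : R = ∅ := eq_empty_of_forall_notMem fun p hp => by
      have h := (ncard_eq_zero (hfin p.1)).1 (Nat.le_zero.1 (hk p.1))
      exact (h ▸ (show p.2 ∈ {y | (p.1, y) ∈ R} from hp) : p.2 ∈ (∅ : Set Y))
    simp [this]
  | succ k ih =>
    set D := Prod.fst '' sectionTuples R (k + 1) with hD
    have hDm : MeasurableSet D := (measurableSet_sectionTuples hR _).image_of_measurable_injOn
      measurable_fst (injOn_fst_sectionTuples hfin hk)
    have hsub : ∀ x, {y | (x, y) ∈ R ∩ Prod.fst ⁻¹' Dᶜ} ⊆ {y | (x, y) ∈ R} :=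
      fun x y hy => hy.1
    have hrest : MeasurableSet (Prod.fst '' (R ∩ Prod.fst ⁻¹' Dᶜ)) := by
      refine ih (hR.inter (measurable_fst hDm.compl)) (fun x => (hfin x).subset (hsub x))
        fun x => ?_
      by_cases hx : x ∈ D
      · have : {y | (x, y) ∈ R ∩ Prod.fst ⁻¹' Dᶜ} = ∅ :=
          eq_empty_of_forall_notMem fun y hy => hy.2 hx
        rw [this, ncard_empty]
        exact Nat.zero_le _
      · refine (ncard_le_ncard (hsub x) (hfin x)).trans ?_
        rw [hD, mem_fst_image_sectionTuples (hfin x)] at hx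
        omega
    have : Prod.fst '' R = D ∪ Prod.fst '' (R ∩ Prod.fst ⁻¹' Dᶜ) := by
      refine Subset.antisymm ?_ (union_subset ?_ (image_mono inter_subset_left))
      · rintro _ ⟨p, hp, rfl⟩
        by_cases hx : p.1 ∈ D
        · exact Or.inl hx
        · exact Or.inr ⟨p, ⟨hp, hx⟩, rfl⟩
      · rintro _ ⟨p, hp, rfl⟩
        exact ⟨(p.1, p.2 0), hp.2 0, rfl⟩
    rw [this]
    exact hDm.union hrest

/-- The projection of a Borel set with finite sections is Borel. -/
theorem measurableSet_fst_image_of_finite {R : Set (X × Y)} (hR : MeasurableSet R)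
    (hfin : ∀ x, {y | (x, y) ∈ R}.Finite) : MeasurableSet (Prod.fst '' R) := by
  let := upgradeStandardBorel X
  obtain ⟨C, hCm, hAC, hC⟩ : MeasurablySeparated fun k => Prod.fst '' sectionTuples R k := by
    refine .of_analyticSet
      (fun k => (measurableSet_sectionTuples hR k).analyticSet_image measurable_fst)
      (eq_empty_of_forall_notMem fun x hx => ?_)
    have := (mem_fst_image_sectionTuples (hfin x) _).1
      (mem_iInter.1 hx ({y | (x, y) ∈ R}.ncard + 1))
    omega
  have hR' : Prod.fst '' R = ⋃ k, Prod.fst '' (R ∩ Prod.fst ⁻¹' (C k)ᶜ) := by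
    rw [← image_iUnion, ← inter_iUnion, ← preimage_iUnion, ← compl_iInter, hC]
    simp
  rw [hR']
  refine .iUnion fun k => ?_
  have hsub : ∀ x, {y | (x, y) ∈ R ∩ Prod.fst ⁻¹' (C k)ᶜ} ⊆ {y | (x, y) ∈ R} :=
    fun x y hy => hy.1
  refine measurableSet_fst_image_of_ncard_le (k := k) (hR.inter (measurable_fst (hCm k).compl))
    (fun x => (hfin x).subset (hsub x)) fun x => ?_
  by_cases hx : x ∈ C k
  · have : {y | (x, y) ∈ R ∩ Prod.fst ⁻¹' (C k)ᶜ} = ∅ :=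
      eq_empty_of_forall_notMem fun y hy => hy.2 hx
    rw [this, ncard_empty]
    exact Nat.zero_le _
  · refine (ncard_le_ncard (hsub x) (hfin x)).trans ?_
    have := mt (fun h => hAC k ((mem_fst_image_sectionTuples (hfin x) k).2 h)) hx
    omega

/-- A Borel set with finite sections is covered by countably many Borel graphs. -/
lemma exists_subset_iUnion_injOn_fst {R : Set (X × Y)} (hR : MeasurableSet R)
    (hfin : ∀ x, {y | (x, y) ∈ R}.Finite) :
    ∃ S : ℕ → Set (X × Y), (∀ n, MeasurableSet (S n)) ∧ (∀ n, InjOn Prod.fst (S n)) ∧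
      R ⊆ ⋃ n, S n := by
  have he : MeasurableEmbedding (embeddingReal Y) := measurableEmbedding_embeddingReal Y
  let P : ℚ × ℚ → Set (X × Y) := fun q =>
    R ∩ (fun p => embeddingReal Y p.2) ⁻¹' Ioo (q.1 : ℝ) q.2
  let W : ℚ × ℚ → Set (X × (Y × Y)) := fun q =>
    {p | (p.1, p.2.1) ∈ P q ∧ (p.1, p.2.2) ∈ P q ∧ p.2.1 ≠ p.2.2}
  have hP : ∀ q, MeasurableSet (P q) := fun q =>
    hR.inter ((he.measurable.comp measurable_snd) measurableSet_Ioo)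
  have hW : ∀ q, MeasurableSet (Prod.fst '' W q) := by
    refine fun q => measurableSet_fst_image_of_finite ?_ fun x => ?_
    · refine .inter ((show Measurable fun p : X × (Y × Y) => (p.1, p.2.1) by fun_prop) (hP q))
        (.inter ((show Measurable fun p : X × (Y × Y) => (p.1, p.2.2) by fun_prop) (hP q)) ?_)
      exact (measurableSet_eq_fun (show Measurable fun p : X × (Y × Y) => p.2.1 by fun_prop)
        (show Measurable fun p : X × (Y × Y) => p.2.2 by fun_prop)).compl
    · exact ((hfin x).prod (hfin x)).subset fun y hy => ⟨hy.1.1, hy.2.1.1⟩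
  let S : ℚ × ℚ → Set (X × Y) := fun q => P q \ Prod.fst ⁻¹' (Prod.fst '' W q)
  have hS : ∀ q, InjOn Prod.fst (S q) := by
    rintro q ⟨x, y⟩ hy ⟨x', z⟩ hz h
    obtain rfl : x = x' := h
    by_contra hne
    exact hy.2 ⟨(x, (y, z)), ⟨hy.1, hz.1, fun h => hne (Prod.ext rfl h)⟩, rfl⟩
  have hRS : R ⊆ ⋃ q, S q := by
    rintro ⟨x, y⟩ hxy
    have hopen : IsOpen (embeddingReal Y '' ({z | (x, z) ∈ R} \ {y}))ᶜ :=
      (((hfin x).sdiff).image _).isClosed.isOpen_compl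
    have hy : embeddingReal Y y ∈ (embeddingReal Y '' ({z | (x, z) ∈ R} \ {y}))ᶜ := by
      rintro ⟨z, hz, hzy⟩
      exact hz.2 (he.injective hzy)
    obtain ⟨v, hv, hyv, hvs⟩ :=
      Real.isTopologicalBasis_Ioo_rat.exists_subset_of_mem_open hy hopen
    simp only [mem_iUnion, mem_singleton_iff] at hv
    obtain ⟨a, b, -, rfl⟩ := hv
    have huniq : ∀ z, (x, z) ∈ P (a, b) → z = y := fun z hz => by
      by_contra hne
      exact hvs hz.2 ⟨z, ⟨hz.1, hne⟩, rfl⟩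
    refine mem_iUnion.2 ⟨(a, b), ⟨hxy, hyv⟩, ?_⟩
    rintro ⟨⟨x', z, z'⟩, hz, h⟩
    obtain rfl : x' = x := h
    exact hz.2.2 ((huniq z hz.1).trans (huniq z' hz.2.1).symm)
  obtain ⟨g, hg⟩ := exists_surjective_nat (ℚ × ℚ)
  exact ⟨fun n => S (g n), fun n => (hP _).diff (measurable_fst (hW _)), fun n => hS _,
    hRS.trans (hg.iUnion_comp S).symm.subset⟩

/-- A locally finite Borel set is a countable disjoint union of graphs of Borel bijections between
Borel sets. -/
theorem exists_disjoint_iUnion_injOn {R : Set (X × Y)} (hR : MeasurableSet R)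
    (hX : ∀ x, {y | (x, y) ∈ R}.Finite) (hY : ∀ y, {x | (x, y) ∈ R}.Finite) :
    ∃ T : ℕ → Set (X × Y), (∀ n, MeasurableSet (T n)) ∧ (∀ n, InjOn Prod.fst (T n)) ∧
      (∀ n, InjOn Prod.snd (T n)) ∧ Pairwise (Function.onFun Disjoint T) ∧ ⋃ n, T n = R := by
  obtain ⟨S, hSm, hS, hRS⟩ := exists_subset_iUnion_injOn_fst hR hX
  obtain ⟨S', hSm', hS', hRS'⟩ :=
    exists_subset_iUnion_injOn_fst (R := Prod.swap ⁻¹' R) (measurable_swap hR) hY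
  let V : ℕ → Set (X × Y) := fun n => R ∩ (S n.unpair.1 ∩ Prod.swap ⁻¹' S' n.unpair.2)
  refine ⟨disjointed V, fun n => ?_, fun n => ?_, fun n => ?_, disjoint_disjointed V, ?_⟩
  · exact .disjointed (fun n => hR.inter ((hSm _).inter (measurable_swap (hSm' _)))) n
  · exact (hS n.unpair.1).mono ((disjointed_subset V n).trans fun p hp => hp.2.1)
  · intro p hp q hq h
    have := hS' n.unpair.2 (disjointed_subset V n hp).2.2 (disjointed_subset V n hq).2.2 h
    exact Prod.swap_injective this
  · rw [iUnion_disjointed]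
    refine Subset.antisymm (iUnion_subset fun n => inter_subset_left) fun p hp => ?_
    obtain ⟨m, hm⟩ := mem_iUnion.1 (hRS hp)
    obtain ⟨n, hn⟩ := mem_iUnion.1 (hRS' (show p.swap ∈ Prod.swap ⁻¹' R by simpa using hp))
    exact mem_iUnion.2 ⟨Nat.pair m n, hp, by simpa using hm, by simpa using hn⟩

/-- Integrating the sizes of the sections of a disjoint union of Borel graphs. -/
lemma lintegral_count_section_iUnion (μ : Measure X) {T : ℕ → Set (X × Y)}
    (hT : ∀ n, MeasurableSet (T n)) (hinj : ∀ n, InjOn Prod.fst (T n))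
    (hdisj : Pairwise (Function.onFun Disjoint T)) :
    ∫⁻ x, Measure.count {y | (x, y) ∈ ⋃ n, T n} ∂μ = ∑' n, μ (Prod.fst '' T n) := by
  have hfst : ∀ n, MeasurableSet (Prod.fst '' T n) := fun n =>
    (hT n).image_of_measurable_injOn measurable_fst (hinj n)
  have hcount : ∀ x, Measure.count {y | (x, y) ∈ ⋃ n, T n} =
      ∑' n, (Prod.fst '' T n).indicator (1 : X → ℝ≥0∞) x := by
    intro x
    have : {y | (x, y) ∈ ⋃ n, T n} = ⋃ n, Prod.mk x ⁻¹' T n := by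
      ext y
      simp
    rw [this, measure_iUnion (fun m n hmn => (hdisj hmn).preimage _)
      fun n => measurable_prodMk_left (hT n)]
    congr 1 with n
    by_cases hx : x ∈ Prod.fst '' T n
    · obtain ⟨⟨x', y⟩, hy, h⟩ := hx
      obtain rfl : x' = x := h
      have : Prod.mk x' ⁻¹' T n = {y} :=
        Subset.antisymm (fun z hz => congrArg Prod.snd (hinj n hz hy rfl))
          (singleton_subset_iff.2 hy)
      rw [indicator_of_mem (show x' ∈ Prod.fst '' T n from ⟨_, hy, rfl⟩), this,
        Measure.count_singleton, Pi.one_apply]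
    · have : Prod.mk x ⁻¹' T n = ∅ := eq_empty_of_forall_notMem fun y hy => hx ⟨_, hy, rfl⟩
      rw [indicator_of_notMem hx, this, measure_empty]
  simp only [hcount]
  rw [lintegral_tsum fun n => (measurable_one.indicator (hfst n)).aemeasurable]
  simp only [lintegral_indicator_one (hfst _)]

lemma MeasurePreservingRel.measure_fst_image_eq {R : Set (X × Y)} {μ : Measure X} {ν : Measure Y}
    (h : MeasurePreservingRel R μ ν) {S : Set (X × Y)} (hS : MeasurableSet S) (hSR : S ⊆ R)
    (hfst : InjOn Prod.fst S) (hsnd : InjOn Prod.snd S) :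
    μ (Prod.fst '' S) = ν (Prod.snd '' S) := by
  rcases S.eq_empty_or_nonempty with rfl | ⟨p, -⟩
  · simp
  have := hS.standardBorel
  have hemb : MeasurableEmbedding fun q : S => q.1.1 :=
    (measurable_fst.comp measurable_subtype_coe).measurableEmbedding
      (injOn_iff_injective.1 hfst)
  obtain ⟨f, hf, hfS⟩ := hemb.exists_measurable_extend
    (measurable_snd.comp measurable_subtype_coe : Measurable fun q : S => q.1.2) fun _ => ⟨p.2⟩
  have hf' : ∀ q ∈ S, f q.1 = q.2 := fun q hq => congrFun hfS ⟨q, hq⟩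
  have himg : f '' (Prod.fst '' S) = Prod.snd '' S := by
    rw [image_image]
    exact image_congr hf'
  rw [← himg]
  refine h _ f (hS.image_of_measurable_injOn measurable_fst hfst) hf ?_ ?_
  · rintro _ ⟨q, hq, rfl⟩ _ ⟨r, hr, rfl⟩ hqr
    rw [hf' q hq, hf' r hr] at hqr
    rw [hsnd hq hr hqr]
  · rintro _ ⟨q, hq, rfl⟩
    rw [hf' q hq]
    exact hSR hq

/-- Double counting: for a locally finite measure-preserving Borel set, the integral of the
sizes of the sections is the same on both sides. -/
theorem MeasurePreservingRel.lintegral_count_section_eq {R : Set (X × Y)} {μ : Measure X}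
    {ν : Measure Y} (h : MeasurePreservingRel R μ ν) (hR : MeasurableSet R)
    (hX : ∀ x, {y | (x, y) ∈ R}.Finite) (hY : ∀ y, {x | (x, y) ∈ R}.Finite) :
    ∫⁻ x, Measure.count {y | (x, y) ∈ R} ∂μ = ∫⁻ y, Measure.count {x | (x, y) ∈ R} ∂ν := by
  obtain ⟨T, hT, hfst, hsnd, hdisj, rfl⟩ := exists_disjoint_iUnion_injOn hR hX hY
  rw [lintegral_count_section_iUnion μ hT hfst hdisj]
  have hswap := lintegral_count_section_iUnion ν (T := fun n => Prod.swap ⁻¹' T n)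
    (fun n => measurable_swap (hT n))
    (fun n p hp q hq hpq => Prod.swap_injective (hsnd n hp hq hpq))
    fun m n hmn => (hdisj hmn).preimage _
  simp only [mem_iUnion, mem_preimage, Prod.swap_prod_mk] at hswap ⊢
  rw [hswap]
  congr 1 with n
  rw [h.measure_fst_image_eq (hT n) (subset_iUnion T n) (hfst n) (hsnd n),
    ← image_swap_eq_preimage_swap, image_image]
  rfl

end FiniteSections

lemma count_eq_ofReal_ncard {α : Type*} [MeasurableSpace α] [MeasurableSingletonClass α]
    {s : Set α} (hs : s.Finite) : Measure.count s = ENNReal.ofReal s.ncard := by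
  rw [Measure.count_apply hs.measurableSet, ← hs.cast_ncard_eq, ENNReal.ofReal_natCast]
  rfl

/-- If `R` is a Borel, locally finite, `(μ,ν)`-preserving set with `|R_x| ≥ a` for
`μ`-a.e. `x` and `|R^y| ≤ b` for `ν`-a.e. `y`, then `ν(R_A) ≥ (a/b)·μ(A)` for all Borel
`A ⊆ X`. -/
theorem stmt5 {X Y : Type*} [MeasurableSpace X] [StandardBorelSpace X]
    [MeasurableSpace Y] [StandardBorelSpace Y]
    (μ : Measure X) (ν : Measure Y)
    (R : Set (X × Y)) (hR : MeasurableSet R)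
    (hlocX : ∀ x : X, {y | (x, y) ∈ R}.Finite)
    (hlocY : ∀ y : Y, {x | (x, y) ∈ R}.Finite)
    (hpres : MeasurePreservingRel R μ ν)
    (a b : ℝ) (ha : 0 < a) (hb : 0 < b)
    (hax : ∀ᵐ x ∂μ, a ≤ ({y | (x, y) ∈ R}.ncard : ℝ))
    (hby : ∀ᵐ y ∂ν, ({x | (x, y) ∈ R}.ncard : ℝ) ≤ b)
    (A : Set X) (hA : MeasurableSet A) :
    ENNReal.ofReal (a / b) * μ A ≤ ν {y | ∃ x ∈ A, (x, y) ∈ R} := by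
  set B := {y | ∃ x ∈ A, (x, y) ∈ R} with hB
  set Q := R ∩ Prod.fst ⁻¹' A with hQ
  have hQm : MeasurableSet Q := hR.inter (measurable_fst hA)
  have hQX : ∀ x, {y | (x, y) ∈ Q}.Finite := fun x => (hlocX x).subset fun y hy => hy.1
  have hQY : ∀ y, {x | (x, y) ∈ Q}.Finite := fun y => (hlocY y).subset fun x hx => hx.1
  have hBm : MeasurableSet B := by
    have : B = Prod.fst '' (Prod.swap ⁻¹' Q) := by
      ext y
      simp [hB, hQ, and_comm]
    rw [this]
    exact measurableSet_fst_image_of_finite (measurable_swap hQm) hQY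
  have hpresQ : MeasurePreservingRel Q μ ν := fun C f hC hf hinj hgraph =>
    hpres C f hC hf hinj fun x hx => (hgraph x hx).1
  have key : ENNReal.ofReal a * μ A ≤ ENNReal.ofReal b * ν B := by
    calc ENNReal.ofReal a * μ A
        = ∫⁻ x, A.indicator (fun _ => ENNReal.ofReal a) x ∂μ := by
          rw [lintegral_indicator_const hA]
      _ ≤ ∫⁻ x, Measure.count {y | (x, y) ∈ Q} ∂μ := by
          refine lintegral_mono_ae (hax.mono fun x hx => ?_)
          by_cases hxA : x ∈ A
          · have : {y | (x, y) ∈ Q} = {y | (x, y) ∈ R} := by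
              ext y
              simp [hQ, hxA]
            rw [indicator_of_mem hxA, this, count_eq_ofReal_ncard (hlocX x)]
            exact ENNReal.ofReal_le_ofReal hx
          · rw [indicator_of_notMem hxA]
            exact zero_le
      _ = ∫⁻ y, Measure.count {x | (x, y) ∈ Q} ∂ν :=
          hpresQ.lintegral_count_section_eq hQm hQX hQY
      _ ≤ ∫⁻ y, B.indicator (fun _ => ENNReal.ofReal b) y ∂ν := by
          refine lintegral_mono_ae (hby.mono fun y hy => ?_)
          by_cases hyB : y ∈ B
          · rw [indicator_of_mem hyB, count_eq_ofReal_ncard (hQY y)]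
            refine ENNReal.ofReal_le_ofReal (le_trans ?_ hy)
            exact_mod_cast ncard_le_ncard
              (show {x | (x, y) ∈ Q} ⊆ {x | (x, y) ∈ R} from fun x hx => hx.1) (hlocY y)
          · have : {x | (x, y) ∈ Q} = ∅ :=
              eq_empty_of_forall_notMem fun x hx => hyB ⟨x, hx.2, hx.1⟩
            rw [this, measure_empty]
            exact zero_le
      _ = ENNReal.ofReal b * ν B := by rw [lintegral_indicator_const hBm]
  have hb0 : ENNReal.ofReal b ≠ 0 := by simpa using hb
  rw [ENNReal.ofReal_div_of_pos hb, ENNReal.div_eq_inv_mul, mul_assoc]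
  exact (ENNReal.inv_mul_le_iff hb0 ENNReal.ofReal_ne_top).2 key
end
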